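/- arXiv:1511.02558 — 2 statements merged into one kernel-verified Lean document; each statement's English description precedes it below -/
import Mathlib

section
/- For every real β with 0 < β < 3π/√24, there exists an integer N such that for all integers n > N, (p(n)^{1/n} / p(n+1)^{1/(n+1)}) · (1 + β/n^{5/2}) < p(n-1)^{1/(n-1)} / p(n)^{1/n}. In particular, the constant 3π/√24 in the inequality (p(n)^{1/n}/p(n+1)^{1/(n+1)})·(1 + 3π/(√24·n^{5/2})) > p(n-1)^{1/(n-1)}/p(n)^{1/n} is best possible. -/
open Real

/-- The partition function, as a real number. -/
noncomputable def p (n : ℕ) : ℝ := (Fintype.card (Nat.Partition n) : ℝ)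

/-!
The logarithm of `∑ p(n) rⁿ` is `∑ σ(n)/n rⁿ`. Put `r = exp (-x)` and, for each `n`, let `x = xₙ`
be the exact saddle point, where the mean `moment 1 x = ∑ σ(n) rⁿ` equals `n`. On that circle
Cauchy's formula writes `p (n + k)` as `exp (k x)` times an integral `J(k)`, up to a factor
independent of `k`, so the second difference of `log p` at `n` is `log (J(1) J(-1) / J(0)²)`:
everything exponentially large has cancelled. The moments satisfy
`xʲ⁺¹ ∑ nʲ⁻¹ σ(n) rⁿ → j! π² / 6`, so with angle `x^{3/2} u` the integrand of `J` converges to a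
Gaussian `exp (-b u²)` with `b = π² / 6`. Away from the saddle, `σ(n)/n ≥ 1` bounds the integrand
by the exponential of a geometric series, which supplies the domination, and Laplace's method yields
`J(k) J(-k) / J(0)² = 1 - k² x³ / (2 b) + o(x³)`. As `xₙ ~ π / √(6 n)`, the second difference of
`log p` is asymptotic to `-(π / √6) / 2 * n^{-3/2}`, while its first difference is asymptotic to
`xₙ`. Summing gives `log p(n) ~ 2 π √(n / 6)`, and the product rule then shows that the second
difference of `log p(n) / n` is asymptotic to `3 π / √24 * n^{-5/2}`.
-/

open Filter Topology MeasureTheory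

section DivisorSums

lemma summable_pow_mul_pow_mul {r : ℝ} (hr₀ : 0 ≤ r) (hr₁ : r < 1) (j : ℕ) :
    Summable fun q : ℕ+ × ℕ+ ↦ ((q.1 * q.2 : ℕ) : ℝ) ^ j * r ^ (q.1 * q.2 : ℕ) := by
  have hr : ‖r‖ < 1 := by rwa [Real.norm_of_nonneg hr₀]
  have hdom : Summable fun n : ℕ+ ↦ (n : ℝ) ^ (j + 1) * r ^ (n : ℕ) :=
    (summable_pow_mul_geometric_of_norm_lt_one (j + 1) hr).comp_injective PNat.coe_injective
  rw [← sigmaAntidiagonalEquivProd.summable_iff]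
  refine (summable_sigma_of_nonneg fun _ ↦ by simp only [Function.comp_apply]; positivity).mpr
    ⟨fun n ↦ (hasSum_fintype _).summable, hdom.of_nonneg_of_le
      (fun n ↦ tsum_nonneg fun _ ↦ by simp only [Function.comp_apply]; positivity) fun n ↦ ?_⟩
  have hfibre (d : Nat.divisorsAntidiagonal n) :
      ((sigmaAntidiagonalEquivProd ⟨n, d⟩).1 * (sigmaAntidiagonalEquivProd ⟨n, d⟩).2 : ℕ) = n :=
    divisorsAntidiagonalFactors_eq d
  have hcard : ((n : ℕ).divisorsAntidiagonal.card : ℝ) ≤ n := by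
    rw [← Nat.map_div_right_divisors, Finset.card_map]
    exact_mod_cast Nat.card_divisors_le_self n
  simp only [Function.comp_apply, hfibre, tsum_fintype, Finset.sum_const, Finset.card_univ,
    Fintype.card_coe, nsmul_eq_mul, pow_succ' _ j, mul_assoc]
  exact mul_le_mul_of_nonneg_right hcard (by positivity)

lemma hasSum_sum_divisorsAntidiagonal {E : Type*} [AddCommGroup E] [TopologicalSpace E]
    [IsTopologicalAddGroup E] {g : ℕ → ℕ → E} {S : E}
    (h : HasSum (fun q : ℕ+ × ℕ+ ↦ g q.1 q.2) S) :
    HasSum (fun n : ℕ ↦ ∑ d ∈ n.divisorsAntidiagonal, g d.1 d.2) S := by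
  have hpnat : HasSum (fun n : ℕ+ ↦ ∑ d ∈ (n : ℕ).divisorsAntidiagonal, g d.1 d.2) S := by
    refine (sigmaAntidiagonalEquivProd.hasSum_iff.mpr h).sigma fun n ↦ ?_
    rw [← Finset.sum_attach]
    exact hasSum_fintype _
  simpa using
    (hasSum_pnat_iff (f := fun n ↦ ∑ d ∈ n.divisorsAntidiagonal, g d.1 d.2)).mp hpnat

/-- The abundancy index `σ(n) / n`, written as the sum of the reciprocals of the divisors of `n`.
These are the coefficients of the logarithm of Euler's product `∏ (1 - z ^ i)⁻¹`. -/
noncomputable def abundancyIndex (n : ℕ) : ℝ := ∑ d ∈ n.divisors, (d : ℝ)⁻¹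

lemma abundancyIndex_eq_sum_divisorsAntidiagonal (n : ℕ) :
    abundancyIndex n = ∑ d ∈ n.divisorsAntidiagonal, (d.1 : ℝ)⁻¹ :=
  (Nat.sum_divisorsAntidiagonal fun i _ ↦ (i : ℝ)⁻¹).symm

lemma abundancyIndex_nonneg (n : ℕ) : 0 ≤ abundancyIndex n :=
  Finset.sum_nonneg fun _ _ ↦ by positivity

lemma one_le_abundancyIndex {n : ℕ} (hn : n ≠ 0) : 1 ≤ abundancyIndex n := by
  simpa [abundancyIndex] using Finset.single_le_sum (f := fun d : ℕ ↦ (d : ℝ)⁻¹)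
    (fun _ _ ↦ by positivity) (Nat.one_mem_divisors.mpr hn)

lemma abundancyIndex_le (n : ℕ) : abundancyIndex n ≤ n :=
  calc abundancyIndex n ≤ ∑ _d ∈ n.divisors, (1 : ℝ) :=
        Finset.sum_le_sum fun d _ ↦ Nat.cast_inv_le_one d
    _ ≤ n := by simpa using Nat.card_divisors_le_self n

end DivisorSums

section GeneratingFunction

open PowerSeries PowerSeries.WithPiTopology

variable {𝕜 : Type*} [RCLike 𝕜] {z : 𝕜}

lemma coeff_mul_mul_pow (A B : 𝕜⟦X⟧) (z : 𝕜) (n : ℕ) :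
    coeff n (A * B) * z ^ n = ∑ q ∈ Finset.HasAntidiagonal.antidiagonal n,
      (coeff q.1 A * z ^ q.1) * (coeff q.2 B * z ^ q.2) := by
  rw [coeff_mul, Finset.sum_mul]
  refine Finset.sum_congr rfl fun q hq ↦ ?_
  rw [← Finset.HasAntidiagonal.mem_antidiagonal.mp hq, pow_add, mul_mul_mul_comm]

lemma summable_coeff_mul {A B : 𝕜⟦X⟧} (hA : Summable fun n ↦ coeff n A * z ^ n)
    (hB : Summable fun n ↦ coeff n B * z ^ n) :
    Summable fun n ↦ coeff n (A * B) * z ^ n := by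
  simp only [coeff_mul_mul_pow]
  exact (summable_norm_sum_mul_antidiagonal_of_summable_norm hA.norm hB.norm).of_norm

lemma tsum_coeff_mul {A B : 𝕜⟦X⟧} (hA : Summable fun n ↦ coeff n A * z ^ n)
    (hB : Summable fun n ↦ coeff n B * z ^ n) :
    ∑' n, coeff n (A * B) * z ^ n = (∑' n, coeff n A * z ^ n) * ∑' n, coeff n B * z ^ n := by
  simp only [coeff_mul_mul_pow]
  exact (tsum_mul_tsum_eq_tsum_sum_antidiagonal_of_summable_norm hA.norm hB.norm).symm

lemma hasSum_coeff_prod {ι : Type*} {A : ι → 𝕜⟦X⟧} {S : ι → 𝕜} (s : Finset ι)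
    (hA : ∀ i ∈ s, HasSum (fun n ↦ coeff n (A i) * z ^ n) (S i)) :
    HasSum (fun n ↦ coeff n (∏ i ∈ s, A i) * z ^ n) (∏ i ∈ s, S i) := by
  classical
  induction s using Finset.induction_on with
  | empty =>
    simpa using hasSum_single (f := fun n ↦ coeff n (1 : 𝕜⟦X⟧) * z ^ n) 0 fun n hn ↦ by
      simp [coeff_one, hn]
  | insert i s his ih =>
    have hi := hA i (Finset.mem_insert_self i s)
    have hs := ih fun k hk ↦ hA k (Finset.mem_insert_of_mem hk)
    rw [Finset.prod_insert his, Finset.prod_insert his, ← hi.tsum_eq, ← hs.tsum_eq,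
      ← tsum_coeff_mul hi.summable hs.summable]
    exact (summable_coeff_mul hi.summable hs.summable).hasSum

lemma tsum_X_pow_mul_eq_expand {k : ℕ} (hk : k ≠ 0) :
    ∑' j : ℕ, (X : 𝕜⟦X⟧) ^ (k * j) = expand k hk (PowerSeries.mk 1) := by
  have htsum : (∑' j : ℕ, (X : 𝕜⟦X⟧) ^ (k * j)) * (1 - X ^ k) = 1 := by
    simp_rw [pow_mul]
    exact tsum_pow_mul_one_sub_of_constantCoeff_eq_zero (by simp [hk])
  have hexpand : (1 - X ^ k) * expand k hk (PowerSeries.mk 1 : 𝕜⟦X⟧) = 1 := by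
    simpa [mul_comm] using congrArg (expand k hk) (mk_one_mul_one_sub_eq_one 𝕜)
  exact left_inv_eq_right_inv htsum hexpand

lemma hasSum_coeff_expand {A : 𝕜⟦X⟧} {S : 𝕜} {k : ℕ} (hk : k ≠ 0)
    (hA : HasSum (fun n ↦ coeff n A * (z ^ k) ^ n) S) :
    HasSum (fun n ↦ coeff n (expand k hk A) * z ^ n) S := by
  have hinj : Function.Injective (k * · : ℕ → ℕ) := fun _ _ ↦ Nat.eq_of_mul_eq_mul_left hk.bot_lt
  refine (hinj.hasSum_iff fun n hn ↦ ?_).mp ?_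
  · rw [coeff_expand_of_not_dvd _ _ _ fun ⟨m, hm⟩ ↦ hn ⟨m, hm.symm⟩, zero_mul]
  · simpa only [Function.comp_def, coeff_expand_mul, pow_mul] using hA

lemma norm_pow_lt_one {z : 𝕜} (hz : ‖z‖ < 1) {k : ℕ} (hk : k ≠ 0) : ‖z ^ k‖ < 1 := by
  rw [norm_pow]
  exact pow_lt_one₀ (norm_nonneg z) hz hk

/-- The number of partitions of `n` into parts of size at most `K`; it approximates `p n` by
coefficients of finite products. -/
def boundedPartitions (K n : ℕ) : ℕ := (Nat.Partition.restricted n (· ≤ K)).card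

lemma boundedPartitions_le_p (K n : ℕ) : (boundedPartitions K n : ℝ) ≤ p n := by
  unfold boundedPartitions p
  exact_mod_cast Finset.card_le_univ _

lemma boundedPartitions_eq_p {K n : ℕ} (h : n ≤ K) : (boundedPartitions K n : ℝ) = p n := by
  have hall : Nat.Partition.restricted n (· ≤ K) = Finset.univ :=
    Finset.filter_true_of_mem fun q _ i hi ↦ (q.le_of_mem_parts hi).trans h
  rw [boundedPartitions, p, hall, Finset.card_univ]

lemma mk_boundedPartitions (K : ℕ) :
    (PowerSeries.mk fun n ↦ (boundedPartitions K n : 𝕜)) =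
      ∏ i ∈ Finset.range K, expand (i + 1) i.succ_ne_zero (PowerSeries.mk 1) := by
  refine ((Nat.Partition.hasProd_powerSeriesMk_card_restricted 𝕜 (· ≤ K)).unique
    (hasProd_prod_of_ne_finset_one (s := Finset.range K) fun i hi ↦
      if_neg (by simpa using hi))).trans (Finset.prod_congr rfl fun i hi ↦ ?_)
  rw [if_pos (by simpa using hi), tsum_X_pow_mul_eq_expand i.succ_ne_zero]

lemma hasSum_boundedPartitions_mul_pow (hz : ‖z‖ < 1) (K : ℕ) :
    HasSum (fun n ↦ (boundedPartitions K n : 𝕜) * z ^ n)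
      (∏ i ∈ Finset.range K, (1 - z ^ (i + 1))⁻¹) := by
  have hfactor (i : ℕ) : HasSum (fun n ↦ coeff n (expand (i + 1) i.succ_ne_zero
      (PowerSeries.mk 1 : 𝕜⟦X⟧)) * z ^ n) (1 - z ^ (i + 1))⁻¹ :=
    hasSum_coeff_expand i.succ_ne_zero <| by
      simpa using hasSum_geometric_of_norm_lt_one (norm_pow_lt_one hz i.succ_ne_zero)
  simpa [← mk_boundedPartitions] using
    hasSum_coeff_prod (Finset.range K) fun i _ ↦ hfactor i

lemma summable_pow_mul_div {z : ℂ} (hz : ‖z‖ < 1) :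
    Summable fun q : ℕ+ × ℕ+ ↦ z ^ (q.1 * q.2 : ℕ) / (q.1 : ℕ) := by
  refine .of_norm_bounded (summable_pow_mul_pow_mul (norm_nonneg z) hz 0) fun q ↦ ?_
  rw [norm_div, norm_pow, Complex.norm_natCast, pow_zero, one_mul]
  exact div_le_self (by positivity) (Nat.one_le_cast.mpr q.1.pos)

lemma hasSum_neg_log_one_sub_pow {z : ℂ} (hz : ‖z‖ < 1) :
    HasSum (fun i : ℕ ↦ -Complex.log (1 - z ^ (i + 1)))
      (∑' n, (abundancyIndex n : ℂ) * z ^ n) := by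
  have hpair := (summable_pow_mul_div hz).hasSum
  have hcoeff (n : ℕ) : (abundancyIndex n : ℂ) * z ^ n =
      ∑ d ∈ n.divisorsAntidiagonal, z ^ (d.1 * d.2) / (d.1 : ℂ) := by
    rw [abundancyIndex_eq_sum_divisorsAntidiagonal, Complex.ofReal_sum, Finset.sum_mul]
    refine Finset.sum_congr rfl fun d hd ↦ ?_
    rw [(Nat.mem_divisorsAntidiagonal.mp hd).1, Complex.ofReal_inv, Complex.ofReal_natCast,
      inv_mul_eq_div]
  have hlog (i : ℕ+) : HasSum (fun j : ℕ+ ↦ z ^ (j * i : ℕ) / (j : ℕ))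
      (-Complex.log (1 - z ^ (i : ℕ))) := by
    simp only [mul_comm _ (i : ℕ), pow_mul]
    refine (hasSum_pnat_iff (f := fun j ↦ (z ^ (i : ℕ)) ^ j / (j : ℂ))).mpr ?_
    simpa using Complex.hasSum_taylorSeries_neg_log (norm_pow_lt_one hz i.ne_zero)
  rw [tsum_congr hcoeff,
    (hasSum_sum_divisorsAntidiagonal (g := fun j i ↦ z ^ (j * i) / (j : ℂ)) hpair).tsum_eq]
  exact (hasSum_pnat_iff_hasSum_succ (f := fun i ↦ -Complex.log (1 - z ^ i))).mp
    (((Equiv.prodComm ℕ+ ℕ+).hasSum_iff.mpr hpair).prod_fiberwise hlog)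

lemma tendsto_prod_one_sub_pow_inv {z : ℂ} (hz : ‖z‖ < 1) :
    Tendsto (fun K ↦ ∏ i ∈ Finset.range K, (1 - z ^ (i + 1))⁻¹) atTop
      (𝓝 (Complex.exp (∑' n, (abundancyIndex n : ℂ) * z ^ n))) := by
  refine ((Complex.continuous_exp.tendsto _).comp
    (hasSum_neg_log_one_sub_pow hz).tendsto_sum_nat).congr fun K ↦ ?_
  rw [Function.comp_apply, Complex.exp_sum]
  refine Finset.prod_congr rfl fun i _ ↦ ?_
  have hne : 1 - z ^ (i + 1) ≠ 0 := sub_ne_zero.mpr fun h ↦ by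
    simpa [← h] using norm_pow_lt_one hz i.succ_ne_zero
  rw [Complex.exp_neg, Complex.exp_log hne]

lemma p_pos (n : ℕ) : 0 < p n := Nat.cast_pos.mpr Fintype.card_pos

lemma summable_p_mul_pow {r : ℝ} (hr₀ : 0 ≤ r) (hr₁ : r < 1) : Summable fun n ↦ p n * r ^ n := by
  have hr : ‖r‖ < 1 := by rwa [Real.norm_of_nonneg hr₀]
  obtain ⟨C, hC⟩ := (tendsto_prod_one_sub_pow_inv (z := r) (by simpa using hr)).norm.bddAbove_range
  refine summable_of_sum_range_le (c := C)
    (fun n ↦ mul_nonneg (p_pos n).le (pow_nonneg hr₀ n)) fun N ↦ ?_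
  have hsum := hasSum_boundedPartitions_mul_pow hr N
  calc ∑ n ∈ Finset.range N, p n * r ^ n
      = ∑ n ∈ Finset.range N, (boundedPartitions N n : ℝ) * r ^ n :=
        Finset.sum_congr rfl fun n hn ↦ by
          rw [boundedPartitions_eq_p (Finset.mem_range.mp hn).le]
    _ ≤ ∏ i ∈ Finset.range N, (1 - r ^ (i + 1))⁻¹ :=
        sum_le_hasSum _ (fun n _ ↦ by positivity) hsum
    _ ≤ ‖∏ i ∈ Finset.range N, (1 - (r : ℂ) ^ (i + 1))⁻¹‖ := by
        rw [show ∏ i ∈ Finset.range N, (1 - (r : ℂ) ^ (i + 1))⁻¹ =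
          ((∏ i ∈ Finset.range N, (1 - r ^ (i + 1))⁻¹ : ℝ) : ℂ) by push_cast; rfl,
          Complex.norm_real]
        exact le_norm_self _
    _ ≤ C := hC ⟨N, rfl⟩

theorem tsum_p_mul_pow {z : ℂ} (hz : ‖z‖ < 1) :
    ∑' n, (p n : ℂ) * z ^ n = Complex.exp (∑' n, (abundancyIndex n : ℂ) * z ^ n) := by
  have hlim : Tendsto (fun K ↦ ∑' n, (boundedPartitions K n : ℂ) * z ^ n) atTop
      (𝓝 (∑' n, (p n : ℂ) * z ^ n)) := by
    refine tendsto_tsum_of_dominated_convergence (bound := fun n ↦ p n * ‖z‖ ^ n)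
      (summable_p_mul_pow (norm_nonneg z) hz) (fun n ↦ ?_) (.of_forall fun K n ↦ ?_)
    · refine tendsto_const_nhds.congr' ?_
      filter_upwards [eventually_ge_atTop n] with K hK
      rw [← boundedPartitions_eq_p hK, Complex.ofReal_natCast]
    · rw [norm_mul, norm_pow, Complex.norm_natCast]
      gcongr
      exact boundedPartitions_le_p K n
  refine tendsto_nhds_unique hlim ?_
  simpa only [(hasSum_boundedPartitions_mul_pow hz _).tsum_eq] using
    tendsto_prod_one_sub_pow_inv hz

end GeneratingFunction

section PowerGeometricSums

lemma summable_pow_mul_geometric {r : ℝ} (hr₀ : 0 ≤ r) (hr₁ : r < 1) (j : ℕ) :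
    Summable fun n : ℕ ↦ (n : ℝ) ^ j * r ^ n :=
  summable_pow_mul_geometric_of_norm_lt_one j (by rwa [Real.norm_of_nonneg hr₀])

lemma factorial_mul_pow_div_le_tsum {r : ℝ} (hr₀ : 0 ≤ r) (hr₁ : r < 1) (j : ℕ) :
    j.factorial * r ^ j / (1 - r) ^ (j + 1) ≤ ∑' n : ℕ, (n : ℝ) ^ j * r ^ n := by
  have hr : ‖r‖ < 1 := by rwa [Real.norm_of_nonneg hr₀]
  have hsum := summable_pow_mul_geometric hr₀ hr₁ j
  calc j.factorial * r ^ j / (1 - r) ^ (j + 1)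
      = ∑' n : ℕ, j.factorial * r ^ j * (((n + j).choose j : ℕ) * r ^ n) := by
        rw [tsum_mul_left, tsum_choose_mul_geometric_of_norm_lt_one j hr, mul_one_div]
    _ ≤ ∑' n : ℕ, ((n + j : ℕ) : ℝ) ^ j * r ^ (n + j) := by
        refine ((summable_choose_mul_geometric_of_norm_lt_one j hr).mul_left _).tsum_le_tsum
          (fun n ↦ ?_) ((summable_nat_add_iff j).mpr hsum)
        have hchoose : (j.factorial : ℝ) * ((n + j).choose j : ℕ) ≤ ((n + j : ℕ) : ℝ) ^ j := by
          exact_mod_cast (Nat.descFactorial_eq_factorial_mul_choose (n + j) j).symm.trans_le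
            (Nat.descFactorial_le_pow _ _)
        rw [mul_mul_mul_comm, ← pow_add, add_comm j n]
        exact mul_le_mul_of_nonneg_right hchoose (pow_nonneg hr₀ _)
    _ ≤ ∑' n : ℕ, (n : ℝ) ^ j * r ^ n :=
        tsum_comp_le_tsum_of_inj hsum (fun _ ↦ by positivity) (add_left_injective j)

lemma tsum_pow_mul_geometric_le {r : ℝ} (hr₀ : 0 ≤ r) (hr₁ : r < 1) {j : ℕ} (hj : j ≠ 0) :
    ∑' n : ℕ, (n : ℝ) ^ j * r ^ n ≤ j.factorial * r / (1 - r) ^ (j + 1) := by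
  have hr : ‖r‖ < 1 := by rwa [Real.norm_of_nonneg hr₀]
  have hsum := summable_pow_mul_geometric hr₀ hr₁ j
  calc ∑' n : ℕ, (n : ℝ) ^ j * r ^ n = ∑' n : ℕ, ((n + 1 : ℕ) : ℝ) ^ j * r ^ (n + 1) := by
        rw [hsum.tsum_eq_zero_add]
        simp [hj]
    _ ≤ ∑' n : ℕ, j.factorial * r * (((n + j).choose j : ℕ) * r ^ n) := by
        refine ((summable_nat_add_iff 1).mpr hsum).tsum_le_tsum (fun n ↦ ?_)
          ((summable_choose_mul_geometric_of_norm_lt_one j hr).mul_left _)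
        have hchoose : ((n + 1 : ℕ) : ℝ) ^ j ≤ j.factorial * ((n + j).choose j : ℕ) := by
          exact_mod_cast (Nat.pow_succ_le_ascFactorial (n + 1) j).trans_eq
            (Nat.ascFactorial_eq_factorial_mul_choose n j)
        rw [mul_mul_mul_comm, ← pow_succ']
        exact mul_le_mul_of_nonneg_right hchoose (pow_nonneg hr₀ _)
    _ = j.factorial * r / (1 - r) ^ (j + 1) := by
        rw [tsum_mul_left, tsum_choose_mul_geometric_of_norm_lt_one j hr, mul_one_div]

lemma tendsto_div_one_sub_exp_neg :
    Tendsto (fun s : ℝ ↦ s / (1 - exp (-s))) (𝓝[>] 0) (𝓝 1) := by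
  have hderiv : HasDerivAt (fun s : ℝ ↦ 1 - exp (-s)) 1 0 := by
    simpa using ((hasDerivAt_neg (0 : ℝ)).exp.const_sub 1)
  simpa [slope_def_field] using
    ((hasDerivAt_iff_tendsto_slope.mp hderiv).mono_left (nhdsGT_le_nhdsNE 0)).inv₀ one_ne_zero

lemma exp_neg_lt_one {s : ℝ} (hs : 0 < s) : exp (-s) < 1 := by
  rwa [exp_lt_one_iff, neg_lt_zero]

lemma div_one_sub_exp_neg_le {s : ℝ} (hs : 0 < s) : s / (1 - exp (-s)) ≤ 1 + s := by
  rw [div_le_iff₀ (sub_pos.mpr (exp_neg_lt_one hs)), mul_sub, mul_one]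
  have hexp : (1 + s) * exp (-s) ≤ 1 := by
    rw [exp_neg, ← div_eq_mul_inv, div_le_one (exp_pos s), add_comm]
    exact add_one_le_exp s
  linarith

lemma tendsto_pow_mul_tsum_pow_mul_exp_neg {j : ℕ} (hj : j ≠ 0) :
    Tendsto (fun s : ℝ ↦ s ^ (j + 1) * ∑' n : ℕ, (n : ℝ) ^ j * exp (-s) ^ n) (𝓝[>] 0)
      (𝓝 j.factorial) := by
  have hfactor (i : ℕ) : Tendsto (fun s : ℝ ↦ (s / (1 - exp (-s))) ^ (j + 1) *
      (j.factorial * exp (-s) ^ i)) (𝓝[>] 0) (𝓝 j.factorial) := by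
    have hexp : Tendsto (fun s : ℝ ↦ exp (-s)) (𝓝[>] 0) (𝓝 1) := by
      have hcont : Continuous fun s : ℝ ↦ exp (-s) := by fun_prop
      simpa using (hcont.tendsto 0).mono_left nhdsWithin_le_nhds
    simpa using (tendsto_div_one_sub_exp_neg.pow (j + 1)).mul ((hexp.pow i).const_mul _)
  refine tendsto_of_tendsto_of_tendsto_of_le_of_le' (hfactor j) (hfactor 1) ?_ ?_
  all_goals
    filter_upwards [self_mem_nhdsWithin] with s (hs : 0 < s)
    rw [div_pow, div_mul_eq_mul_div, mul_div_assoc]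
    refine mul_le_mul_of_nonneg_left ?_ (by positivity)
  · exact factorial_mul_pow_div_le_tsum (exp_pos _).le (exp_neg_lt_one hs) j
  · rw [pow_one]
    exact tsum_pow_mul_geometric_le (exp_pos _).le (exp_neg_lt_one hs) hj

lemma pow_mul_tsum_pow_mul_exp_neg_le {j : ℕ} (hj : j ≠ 0) {s : ℝ} (hs : 0 < s) :
    s ^ (j + 1) * ∑' n : ℕ, (n : ℝ) ^ j * exp (-s) ^ n ≤
      j.factorial * ((j + 1).factorial * exp 1) := by
  have hpow : (1 + s) ^ (j + 1) ≤ (j + 1).factorial * exp (1 + s) := by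
    rw [mul_comm, ← div_le_iff₀ (by positivity)]
    exact pow_div_factorial_le_exp _ (by positivity) _
  have h₁ : 0 < 1 - exp (-s) := sub_pos.mpr (exp_neg_lt_one hs)
  calc s ^ (j + 1) * ∑' n : ℕ, (n : ℝ) ^ j * exp (-s) ^ n
      ≤ s ^ (j + 1) * (j.factorial * exp (-s) / (1 - exp (-s)) ^ (j + 1)) := by
        gcongr
        exact tsum_pow_mul_geometric_le (exp_pos _).le (exp_neg_lt_one hs) hj
    _ = j.factorial * ((s / (1 - exp (-s))) ^ (j + 1) * exp (-s)) := by
        rw [div_pow]; ring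
    _ ≤ j.factorial * (((j + 1).factorial * exp (1 + s)) * exp (-s)) := by
        gcongr
        exact (pow_le_pow_left₀ (by positivity) (div_one_sub_exp_neg_le hs) _).trans hpow
    _ = j.factorial * ((j + 1).factorial * exp 1) := by
        rw [mul_assoc _ (exp _), ← exp_add, add_neg_cancel_right]

end PowerGeometricSums

section Moments

/-- The `j`-th moment `∑ n ^ j a(n) e ^ (-n x)` of the coefficients `a(n) = σ(n) / n`; up to sign,
the `j`-th derivative at `x` of the logarithm of the partition generating function at `e ^ (-x)`. -/
noncomputable def moment (j : ℕ) (x : ℝ) : ℝ :=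
  ∑' n : ℕ, (n : ℝ) ^ j * (abundancyIndex n * exp (-x) ^ n)

lemma summable_moment (j : ℕ) {x : ℝ} (hx : 0 < x) :
    Summable fun n : ℕ ↦ (n : ℝ) ^ j * (abundancyIndex n * exp (-x) ^ n) := by
  refine (summable_pow_mul_geometric (exp_pos _).le (exp_neg_lt_one hx) (j + 1)).of_nonneg_of_le
    (fun n ↦ ?_) fun n ↦ ?_
  · have := abundancyIndex_nonneg n
    positivity
  · rw [pow_succ, mul_assoc]
    gcongr
    exact abundancyIndex_le n

lemma hasSum_moment {j : ℕ} (hj : j ≠ 0) {x : ℝ} (hx : 0 < x) :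
    HasSum (fun d : ℕ ↦ (d : ℝ) ^ j / d * ∑' k : ℕ, (k : ℝ) ^ j * exp (-(x * d)) ^ k)
      (moment j x) := by
  let g (d k : ℕ) : ℝ := (d : ℝ) ^ j / d * ((k : ℝ) ^ j * exp (-(x * d)) ^ k)
  have hg (d k : ℕ) : g d k = ((d * k : ℕ) : ℝ) ^ j * exp (-x) ^ (d * k) / d := by
    have hexp : exp (-x) ^ (d * k) = exp (-(x * d)) ^ k := by
      rw [pow_mul, ← exp_nat_mul, mul_neg, mul_comm x]
    simp only [g, hexp, Nat.cast_mul, mul_pow]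
    ring
  have hpair : HasSum (fun q : ℕ+ × ℕ+ ↦ g q.1 q.2) (∑' q : ℕ+ × ℕ+, g q.1 q.2) := by
    refine ((summable_pow_mul_pow_mul (exp_pos _).le (exp_neg_lt_one hx) j).of_nonneg_of_le
      (fun _ ↦ by positivity) fun q ↦ ?_).hasSum
    rw [hg]
    exact div_le_self (by positivity) (Nat.one_le_cast.mpr q.1.pos)
  have hmoment : moment j x = ∑' q : ℕ+ × ℕ+, g q.1 q.2 := by
    rw [moment, ← (hasSum_sum_divisorsAntidiagonal hpair).tsum_eq]
    refine tsum_congr fun n ↦ ?_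
    rw [abundancyIndex_eq_sum_divisorsAntidiagonal, Finset.sum_mul, Finset.mul_sum]
    refine Finset.sum_congr rfl fun q hq ↦ ?_
    rw [hg, (Nat.mem_divisorsAntidiagonal.mp hq).1]
    ring
  have hfibre (d : ℕ+) : HasSum (fun k : ℕ+ ↦ g d k) (∑' k, g d k) := by
    refine (hasSum_pnat_iff (f := g d)).mpr ?_
    rw [show g d 0 = 0 by simp [g, hj], add_zero]
    exact ((summable_pow_mul_geometric (exp_pos _).le
      (exp_neg_lt_one (mul_pos hx (Nat.cast_pos.mpr d.pos))) j).mul_left _).hasSum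
  rw [hmoment]
  simpa [g, tsum_mul_left] using
    (hasSum_pnat_iff (f := fun d ↦ ∑' k, g d k)).mp (hpair.prod_fiberwise hfibre)

lemma tendsto_tsum_one_div_sq_mul_comp_mul {G : ℝ → ℝ} {L C : ℝ} (hG : Tendsto G (𝓝[>] 0) (𝓝 L))
    (hC : ∀ s, 0 < s → |G s| ≤ C) :
    Tendsto (fun x ↦ ∑' d : ℕ, 1 / (d : ℝ) ^ 2 * G (x * d)) (𝓝[>] 0) (𝓝 (π ^ 2 / 6 * L)) := by
  rw [← hasSum_zeta_two.tsum_eq, ← tsum_mul_right]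
  refine tendsto_tsum_of_dominated_convergence (hasSum_zeta_two.summable.mul_right C)
    (fun d ↦ ?_) ?_
  · rcases eq_or_ne d 0 with rfl | hd
    · simp
    have hd₀ : (0 : ℝ) < d := Nat.cast_pos.mpr hd.bot_lt
    have hcont : Tendsto (fun x : ℝ ↦ x * d) (𝓝 0) (𝓝 0) := by
      simpa using (tendsto_id (x := 𝓝 (0 : ℝ))).mul_const (d : ℝ)
    exact (hG.comp (tendsto_nhdsWithin_iff.mpr ⟨hcont.mono_left nhdsWithin_le_nhds,
      eventually_mem_nhdsWithin.mono fun x hx ↦ mul_pos hx hd₀⟩)).const_mul _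
  · filter_upwards [self_mem_nhdsWithin] with x (hx : 0 < x) d
    rcases eq_or_ne d 0 with rfl | hd
    · simp
    rw [norm_mul, Real.norm_of_nonneg (by positivity)]
    gcongr
    exact hC _ (mul_pos hx (Nat.cast_pos.mpr hd.bot_lt))

lemma tendsto_pow_mul_moment {j : ℕ} (hj : j ≠ 0) :
    Tendsto (fun x ↦ x ^ (j + 1) * moment j x) (𝓝[>] 0) (𝓝 (π ^ 2 / 6 * j.factorial)) := by
  refine (tendsto_tsum_one_div_sq_mul_comp_mul (tendsto_pow_mul_tsum_pow_mul_exp_neg hj)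
    (C := j.factorial * ((j + 1).factorial * exp 1)) fun s hs ↦ ?_).congr' ?_
  · rw [abs_of_nonneg (mul_nonneg (by positivity) (tsum_nonneg fun _ ↦ by positivity))]
    exact pow_mul_tsum_pow_mul_exp_neg_le hj hs
  · filter_upwards [self_mem_nhdsWithin] with x (hx : 0 < x)
    rw [← (hasSum_moment hj hx).tsum_eq, ← tsum_mul_left]
    refine tsum_congr fun d ↦ ?_
    rcases eq_or_ne d 0 with rfl | hd
    · simp
    have hd₀ : (d : ℝ) ≠ 0 := Nat.cast_ne_zero.mpr hd
    simp only [mul_pow]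
    field_simp
    ring

end Moments

section LogRatio

lemma norm_exp_mul_I_sub_one_le (θ : ℝ) : ‖Complex.exp (θ * Complex.I) - 1‖ ≤ |θ| := by
  rw [mul_comm]
  exact norm_exp_I_mul_ofReal_sub_one_le

lemma norm_exp_mul_I_sub_taylor_le (θ : ℝ) :
    ‖Complex.exp (θ * Complex.I) - 1 - (θ * Complex.I - (θ : ℂ) ^ 2 / 2)‖ ≤ 4 * |θ| ^ 3 := by
  have hnorm : ‖(θ : ℂ) * Complex.I‖ = |θ| := by simp
  rcases le_total |θ| 1 with hθ | hθ
  · have hexp := Complex.exp_bound (hnorm.trans_le hθ) three_pos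
    rw [hnorm] at hexp
    have htaylor : ∑ m ∈ Finset.range 3, ((θ : ℂ) * Complex.I) ^ m / (m.factorial : ℂ) =
        1 + (θ * Complex.I - (θ : ℂ) ^ 2 / 2) := by
      simp only [Finset.sum_range_succ, Finset.sum_range_zero, mul_pow, Complex.I_sq,
        Nat.factorial]
      push_cast
      ring
    rw [sub_sub, ← htaylor, mul_comm (4 : ℝ)]
    refine hexp.trans (mul_le_mul_of_nonneg_left ?_ (by positivity))
    norm_num [Nat.factorial]
  · calc ‖Complex.exp (θ * Complex.I) - 1 - (θ * Complex.I - (θ : ℂ) ^ 2 / 2)‖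
        ≤ |θ| + (|θ| + |θ| ^ 2 / 2) := by
          refine norm_sub_le_of_le (norm_exp_mul_I_sub_one_le θ) (norm_sub_le_of_le hnorm.le ?_)
          simp
      _ ≤ 4 * |θ| ^ 3 := by
          have h₁ : |θ| ≤ |θ| ^ 3 := le_self_pow₀ hθ three_ne_zero
          have h₂ : |θ| ^ 2 ≤ |θ| ^ 3 := pow_le_pow_right₀ hθ (by norm_num)
          linarith

variable {w : ℕ → ℝ}

lemma norm_mul_exp_sub_one_le (w θ : ℝ) :
    ‖(w : ℂ) * (Complex.exp (θ * Complex.I) - 1)‖ ≤ ‖w‖ * 2 := by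
  rw [norm_mul, Complex.norm_real]
  gcongr
  refine (norm_sub_le _ _).trans ?_
  rw [Complex.norm_exp_ofReal_mul_I, norm_one, one_add_one_eq_two]

lemma summable_mul_exp_sub_one (hw : Summable w) (y : ℝ) :
    Summable fun n : ℕ ↦ (w n : ℂ) * (Complex.exp ((n * y : ℝ) * Complex.I) - 1) :=
  (hw.norm.mul_right 2).of_norm_bounded fun _ ↦ norm_mul_exp_sub_one_le _ _

lemma continuous_tsum_mul_exp_sub_one (hw : Summable w) :
    Continuous fun y : ℝ ↦
      ∑' n : ℕ, (w n : ℂ) * (Complex.exp ((n * y : ℝ) * Complex.I) - 1) :=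
  continuous_tsum (fun n ↦ by fun_prop) (hw.norm.mul_right 2) fun _ _ ↦
    norm_mul_exp_sub_one_le _ _

lemma norm_tsum_mul_exp_sub_one_sub_le (hw₀ : ∀ n, 0 ≤ w n)
    (hw : ∀ j, Summable fun n : ℕ ↦ (n : ℝ) ^ j * w n) (y : ℝ) :
    ‖∑' n : ℕ, (w n : ℂ) * (Complex.exp ((n * y : ℝ) * Complex.I) - 1) -
        ((y * ∑' n : ℕ, (n : ℝ) ^ 1 * w n : ℝ) * Complex.I -
          (y ^ 2 / 2 * ∑' n : ℕ, (n : ℝ) ^ 2 * w n : ℝ))‖ ≤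
      4 * |y| ^ 3 * ∑' n : ℕ, (n : ℝ) ^ 3 * w n := by
  have hsum := ((summable_mul_exp_sub_one (by simpa using hw 0) y).hasSum.sub
    (((Complex.hasSum_ofReal.mpr ((hw 1).hasSum.mul_left y)).mul_right Complex.I).sub
      (Complex.hasSum_ofReal.mpr ((hw 2).hasSum.mul_left (y ^ 2 / 2)))))
  rw [← hsum.tsum_eq]
  refine tsum_of_norm_bounded ((hw 3).hasSum.mul_left (4 * |y| ^ 3)) fun n ↦ ?_
  have hterm : (w n : ℂ) * (Complex.exp ((n * y : ℝ) * Complex.I) - 1) -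
      ((y * ((n : ℝ) ^ 1 * w n) : ℝ) * Complex.I - (y ^ 2 / 2 * ((n : ℝ) ^ 2 * w n) : ℝ)) =
      w n * (Complex.exp ((n * y : ℝ) * Complex.I) - 1 -
        ((n * y : ℝ) * Complex.I - ((n * y : ℝ) : ℂ) ^ 2 / 2)) := by
    push_cast
    ring
  rw [hterm, norm_mul, Complex.norm_real, Real.norm_of_nonneg (hw₀ n)]
  calc w n * _ ≤ w n * (4 * |n * y| ^ 3) :=
        mul_le_mul_of_nonneg_left (norm_exp_mul_I_sub_taylor_le _) (hw₀ n)
    _ = 4 * |y| ^ 3 * ((n : ℝ) ^ 3 * w n) := by rw [abs_mul, Nat.abs_cast]; ring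

lemma hasSum_mul_one_sub_cos (hw : Summable w) (y : ℝ) :
    HasSum (fun n : ℕ ↦ w n * (1 - cos (n * y)))
      (-(∑' n : ℕ, (w n : ℂ) * (Complex.exp ((n * y : ℝ) * Complex.I) - 1)).re) := by
  refine (Complex.hasSum_re (summable_mul_exp_sub_one hw y).hasSum).neg.congr_fun fun n ↦ ?_
  rw [Complex.re_ofReal_mul, Complex.sub_re, Complex.exp_ofReal_mul_I_re, Complex.one_re]
  ring

/-- The logarithm `∑ a(n) e ^ (-n x) (e ^ (i n y) - 1)` of the ratio of the values of the partition
generating function at `e ^ (-x + i y)` and at `e ^ (-x)`. -/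
noncomputable def logRatio (x y : ℝ) : ℂ :=
  ∑' n : ℕ, ((abundancyIndex n * exp (-x) ^ n : ℝ) : ℂ) *
    (Complex.exp ((n * y : ℝ) * Complex.I) - 1)

variable {x y : ℝ}

lemma summable_abundancyIndex_mul_exp_pow (hx : 0 < x) :
    Summable fun n : ℕ ↦ abundancyIndex n * exp (-x) ^ n := by
  simpa using summable_moment 0 hx

lemma continuous_logRatio (hx : 0 < x) : Continuous (logRatio x) :=
  continuous_tsum_mul_exp_sub_one (summable_abundancyIndex_mul_exp_pow hx)

lemma norm_logRatio_sub_le (hx : 0 < x) (y : ℝ) :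
    ‖logRatio x y - ((y * moment 1 x : ℝ) * Complex.I - (y ^ 2 / 2 * moment 2 x : ℝ))‖ ≤
      4 * |y| ^ 3 * moment 3 x :=
  norm_tsum_mul_exp_sub_one_sub_le
    (fun n ↦ mul_nonneg (abundancyIndex_nonneg n) (pow_nonneg (exp_pos _).le n))
    (summable_moment · hx) y

lemma tsum_p_mul_exp_pow (hx : 0 < x) (y : ℝ) :
    ∑' n, (p n : ℂ) * Complex.exp (-x + y * Complex.I) ^ n =
      exp (moment 0 x) * Complex.exp (logRatio x y) := by
  have hnorm : ‖Complex.exp (-x + y * Complex.I)‖ < 1 := by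
    rw [Complex.norm_exp]
    simpa using hx
  have hmoment := Complex.hasSum_ofReal.mpr (summable_moment 0 hx).hasSum
  rw [tsum_p_mul_pow hnorm, Complex.ofReal_exp, ← Complex.exp_add, moment, logRatio,
    ← hmoment.tsum_eq, ← hmoment.summable.tsum_add
      (summable_mul_exp_sub_one (summable_abundancyIndex_mul_exp_pow hx) y)]
  congr 1
  refine tsum_congr fun n ↦ ?_
  rw [Complex.exp_add, mul_pow, ← Complex.exp_nat_mul (y * Complex.I)]
  push_cast
  rw [mul_assoc (n : ℂ)]
  ring

lemma hasSum_pow_mul_one_sub_cos {r : ℝ} (hr₀ : 0 ≤ r) (hr₁ : r < 1) (y : ℝ) :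
    HasSum (fun n : ℕ ↦ r ^ n * (1 - cos (n * y)))
      (r * (1 - cos y) * (1 + r) / ((1 - r) * ((1 - r) ^ 2 + 2 * (r * (1 - cos y))))) := by
  have hnorm : ‖(r : ℂ) * Complex.exp (y * Complex.I)‖ < 1 := by
    rwa [norm_mul, Complex.norm_exp_ofReal_mul_I, mul_one, Complex.norm_real,
      Real.norm_of_nonneg hr₀]
  have hre : (1 - r * Complex.exp (y * Complex.I)).re = 1 - r * cos y := by
    rw [Complex.sub_re, Complex.re_ofReal_mul, Complex.exp_ofReal_mul_I_re, Complex.one_re]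
  have hnormSq : Complex.normSq (1 - r * Complex.exp (y * Complex.I)) =
      (1 - r) ^ 2 + 2 * (r * (1 - cos y)) := by
    rw [Complex.normSq_apply, hre, Complex.sub_im, Complex.im_ofReal_mul,
      Complex.exp_ofReal_mul_I_im, Complex.one_im]
    linear_combination r ^ 2 * sin_sq_add_cos_sq y
  have hsum := (hasSum_geometric_of_lt_one hr₀ hr₁).sub
    (Complex.hasSum_re (hasSum_geometric_of_norm_lt_one hnorm))
  rw [Complex.inv_re, hre, hnormSq] at hsum
  have hd : 1 - r ≠ 0 := (sub_pos.mpr hr₁).ne'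
  have hD : (1 - r) ^ 2 + 2 * (r * (1 - cos y)) ≠ 0 := by
    have := sub_nonneg.mpr (cos_le_one y)
    have := sub_pos.mpr hr₁
    positivity
  have hvalue : r * (1 - cos y) * (1 + r) / ((1 - r) * ((1 - r) ^ 2 + 2 * (r * (1 - cos y)))) =
      (1 - r)⁻¹ - (1 - r * cos y) / ((1 - r) ^ 2 + 2 * (r * (1 - cos y))) := by
    rw [inv_eq_one_div, div_sub_div _ _ hd hD]
    congr 1
    ring
  rw [hvalue]
  refine hsum.congr_fun fun n ↦ ?_
  rw [mul_pow, ← Complex.exp_nat_mul, ← mul_assoc, ← Complex.ofReal_pow, Complex.re_ofReal_mul,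
    ← Complex.ofReal_natCast, ← Complex.ofReal_mul, Complex.exp_ofReal_mul_I_re]
  ring

lemma re_logRatio_le (hx : 0 < x) (y : ℝ) :
    (logRatio x y).re ≤ -(exp (-x) * (1 - cos y) * (1 + exp (-x)) /
      ((1 - exp (-x)) * ((1 - exp (-x)) ^ 2 + 2 * (exp (-x) * (1 - cos y))))) := by
  rw [le_neg]
  refine hasSum_le (fun n ↦ ?_)
    (hasSum_pow_mul_one_sub_cos (exp_pos _).le (exp_neg_lt_one hx) y)
    (hasSum_mul_one_sub_cos (summable_abundancyIndex_mul_exp_pow hx) y)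
  rcases eq_or_ne n 0 with rfl | hn
  · simp
  have := sub_nonneg.mpr (cos_le_one (n * y))
  gcongr
  exact le_mul_of_one_le_left (by positivity) (one_le_abundancyIndex hn)

lemma mul_sq_le_exp_neg_mul_one_sub_cos (hx₁ : x ≤ 1) (hy : |y| ≤ π) :
    2 / (π ^ 2 * exp 1) * y ^ 2 ≤ exp (-x) * (1 - cos y) := by
  have hcos := cos_le_one_sub_mul_cos_sq hy
  calc 2 / (π ^ 2 * exp 1) * y ^ 2 = exp (-1) * (2 / π ^ 2 * y ^ 2) := by
        rw [exp_neg]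
        field_simp
    _ ≤ exp (-x) * (1 - cos y) := by
        gcongr
        linarith

lemma re_logRatio_le_neg_div (hx₀ : 0 < x) {v : ℝ} (hv₀ : 0 ≤ v)
    (hv : v ≤ exp (-x) * (1 - cos y)) : (logRatio x y).re ≤ -(v / (x * (x ^ 2 + 2 * v))) := by
  refine (re_logRatio_le hx₀ y).trans (neg_le_neg ?_)
  have hd₀ : 0 < 1 - exp (-x) := sub_pos.mpr (exp_neg_lt_one hx₀)
  have hdx : 1 - exp (-x) ≤ x := by linarith [add_one_le_exp (-x)]
  generalize exp (-x) * (1 - cos y) = w at hv ⊢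
  have hw₀ : 0 ≤ w := hv₀.trans hv
  calc v / (x * (x ^ 2 + 2 * v)) ≤ w / (x * (x ^ 2 + 2 * w)) := by
        rw [div_le_div_iff₀ (by positivity) (by positivity)]
        nlinarith [mul_le_mul_of_nonneg_right hv (pow_pos hx₀ 3).le]
    _ ≤ w * (1 + exp (-x)) / ((1 - exp (-x)) * ((1 - exp (-x)) ^ 2 + 2 * w)) := by
        gcongr
        exact le_mul_of_one_le_right hw₀ (by linarith [exp_pos (-x)])

-- As `x ≤ a ^ (-1/3)`, the quotient `a / (1 + 2 x a)` is at least of order `a ^ (1/3)` for large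
-- `a`, so its exponential still beats any power of `a`.
lemma exp_neg_div_le {a : ℝ} (hx : 0 ≤ x) (ha : 0 ≤ a) (hxa : x ^ 3 * a ≤ 1) :
    exp (-(a / (1 + 2 * x * a))) ≤ 32 ^ 2 * (Nat.factorial 6 * exp 1) / (1 + a) ^ 2 := by
  set w := a / (1 + 2 * x * a) with hw
  have hcube : (1 + 2 * x * a) ^ 3 ≤ 32 * (1 + a) ^ 2 := by
    calc (1 + 2 * x * a) ^ 3 ≤ 2 ^ (3 - 1) * (1 ^ 3 + (2 * x * a) ^ 3) :=
          add_pow_le zero_le_one (by positivity) 3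
      _ = 4 + 32 * (x ^ 3 * a) * a ^ 2 := by ring
      _ ≤ 4 + 32 * 1 * a ^ 2 := by gcongr
      _ ≤ 32 * (1 + a) ^ 2 := by nlinarith
  have hle : 1 + a ≤ 32 * (1 + w) ^ 3 := by
    have hmul : 1 + a ≤ (1 + w) * (1 + 2 * x * a) := by
      rw [hw, add_mul, div_mul_cancel₀ _ (by positivity)]
      nlinarith [mul_nonneg hx ha]
    refine le_of_mul_le_mul_right ?_ (show 0 < (1 + a) ^ 2 by positivity)
    calc (1 + a) * (1 + a) ^ 2 = (1 + a) ^ 3 := by ring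
      _ ≤ ((1 + w) * (1 + 2 * x * a)) ^ 3 := by gcongr
      _ = (1 + w) ^ 3 * (1 + 2 * x * a) ^ 3 := mul_pow _ _ _
      _ ≤ (1 + w) ^ 3 * (32 * (1 + a) ^ 2) := by gcongr
      _ = 32 * (1 + w) ^ 3 * (1 + a) ^ 2 := by ring
  have hexp : (1 + w) ^ 6 ≤ Nat.factorial 6 * exp (1 + w) := by
    rw [mul_comm, ← div_le_iff₀ (by positivity)]
    exact pow_div_factorial_le_exp _ (by positivity) _
  rw [exp_neg, le_div_iff₀ (by positivity), inv_mul_le_iff₀ (exp_pos w)]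
  calc (1 + a) ^ 2 ≤ (32 * (1 + w) ^ 3) ^ 2 := by gcongr
    _ = 32 ^ 2 * (1 + w) ^ 6 := by ring
    _ ≤ 32 ^ 2 * (Nat.factorial 6 * exp (1 + w)) := by gcongr
    _ = exp w * (32 ^ 2 * (Nat.factorial 6 * exp 1)) := by rw [exp_add]; ring

end LogRatio

section LaplaceMethod

lemma integral_mul_gaussian (b : ℝ) : ∫ u : ℝ, u * exp (-b * u ^ 2) = 0 := by
  have hodd := integral_neg_eq_self (fun u : ℝ ↦ u * exp (-b * u ^ 2)) volume
  simp only [neg_mul, even_two, Even.neg_pow, integral_neg] at hodd ⊢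
  linarith

lemma integral_sq_mul_gaussian {b : ℝ} (hb : 0 < b) :
    ∫ u : ℝ, u ^ 2 * exp (-b * u ^ 2) = (∫ u : ℝ, exp (-b * u ^ 2)) / (2 * b) := by
  have h₀ := integrable_exp_neg_mul_sq hb
  have h₁ := integrable_mul_exp_neg_mul_sq hb
  have h₂ : Integrable fun u : ℝ ↦ u ^ 2 * exp (-b * u ^ 2) := by
    simpa using integrable_rpow_mul_exp_neg_mul_sq hb (s := 2) (by norm_num)
  have hderiv (u : ℝ) : HasDerivAt (fun u : ℝ ↦ u * exp (-b * u ^ 2))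
      (exp (-b * u ^ 2) - 2 * b * (u ^ 2 * exp (-b * u ^ 2))) u := by
    refine ((hasDerivAt_id u).mul ((hasDerivAt_pow 2 u).const_mul (-b)).exp).congr_deriv ?_
    simp only [id]
    push_cast
    ring
  have hparts := integral_eq_zero_of_hasDerivAt_of_integrable hderiv (h₀.sub (h₂.const_mul _)) h₁
  rw [integral_sub h₀ (h₂.const_mul _), integral_const_mul] at hparts
  rw [eq_div_iff (by positivity)]
  linarith

lemma integral_gaussian_ofReal_ne_zero {b : ℝ} (hb : 0 < b) :
    ((∫ u : ℝ, exp (-b * u ^ 2) : ℝ) : ℂ) ≠ 0 := by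
  rw [integral_gaussian, Complex.ofReal_ne_zero]
  positivity

lemma exp_mul_I_add_exp_neg_mul_I_sub_two (θ : ℝ) :
    Complex.exp (θ * Complex.I) + Complex.exp ((-θ : ℝ) * Complex.I) - 2 =
      -((‖Complex.exp (θ * Complex.I) - 1‖ ^ 2 : ℝ) : ℂ) := by
  have hconj : (starRingEnd ℂ) (Complex.exp (θ * Complex.I)) =
      Complex.exp ((-θ : ℝ) * Complex.I) := by
    rw [← Complex.exp_conj]
    simp
  have hinv : Complex.exp (θ * Complex.I) * Complex.exp ((-θ : ℝ) * Complex.I) = 1 := by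
    rw [← Complex.exp_add]
    simp
  rw [Complex.ofReal_pow, ← Complex.mul_conj', map_sub, map_one, hconj]
  linear_combination hinv

lemma tendsto_exp_mul_I_sub_one_div (c : ℝ) :
    Tendsto (fun t : ℝ ↦ (Complex.exp ((c * t : ℝ) * Complex.I) - 1) / t) (𝓝[>] 0)
      (𝓝 (c * Complex.I)) := by
  have hderiv : HasDerivAt (fun t : ℝ ↦ Complex.exp ((c * t : ℝ) * Complex.I))
      (c * Complex.I) 0 := by
    have hlin : HasDerivAt (fun t : ℝ ↦ ((c * t : ℝ) : ℂ) * Complex.I) (c * Complex.I) 0 := by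
      simpa using (((hasDerivAt_id (0 : ℝ)).const_mul c).ofReal_comp).mul_const Complex.I
    simpa using hlin.cexp
  refine ((hasDerivAt_iff_tendsto_slope_zero.mp hderiv).mono_left (nhdsGT_le_nhdsNE 0)).congr
    fun t ↦ ?_
  simp [Complex.real_smul, div_eq_inv_mul]

lemma norm_exp_mul_I_sub_one_div_le {t : ℝ} (ht : 0 < t) (c : ℝ) :
    ‖(Complex.exp ((c * t : ℝ) * Complex.I) - 1) / t‖ ≤ |c| := by
  rw [norm_div, Complex.norm_real, Real.norm_of_nonneg ht.le, div_le_iff₀ ht]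
  refine (norm_exp_mul_I_sub_one_le _).trans_eq ?_
  rw [abs_mul, abs_of_pos ht]

variable {ι : Type*} {l : Filter ι} {φ : ι → ℝ → ℂ} {h : ι → ℝ} {b C : ℝ}

/-- The hypotheses of Laplace's method: along `l`, where the scale `h` tends to `0` from above, the
functions `φ i` converge to the Gaussian `exp (-b u ^ 2)`, dominated on `|h i * u| ≤ π` by a
function with a finite second moment. -/
structure IsLaplaceFamily (φ : ι → ℝ → ℂ) (h : ι → ℝ) (l : Filter ι) (b C : ℝ) : Prop where
  tendsto_scale : Tendsto h l (𝓝[>] 0)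
  continuous : ∀ᶠ i in l, Continuous (φ i)
  norm_le : ∀ᶠ i in l, ∀ u, |h i * u| ≤ π → ‖φ i u‖ ≤ C / (1 + u ^ 2) ^ 2
  tendsto : ∀ u, Tendsto (φ · u) l (𝓝 (exp (-b * u ^ 2) : ℝ))

namespace IsLaplaceFamily

lemma eventually_scale_pos (hφ : IsLaplaceFamily φ h l b C) : ∀ᶠ i in l, 0 < h i :=
  hφ.tendsto_scale.eventually self_mem_nhdsWithin

lemma eventually_norm_indicator_le (hφ : IsLaplaceFamily φ h l b C) {g : ι → ℝ → ℂ} {B : ℝ}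
    (hg : ∀ᶠ i in l, ∀ u, ‖g i u‖ ≤ B * (1 + u ^ 2)) :
    ∀ᶠ i in l, ∀ u, ‖(Set.Ioc (-(π / h i)) (π / h i)).indicator (fun u ↦ φ i u * g i u) u‖ ≤
      |C * B| * (1 + u ^ 2)⁻¹ := by
  filter_upwards [hφ.eventually_scale_pos, hφ.norm_le, hg] with i hi hφi hgi u
  rw [norm_indicator_eq_indicator_norm]
  refine Set.indicator_apply_le' (fun hu ↦ ?_) fun _ ↦ by positivity
  have hu' : |h i * u| ≤ π := by
    rw [abs_mul, abs_of_pos hi, mul_comm, ← le_div_iff₀ hi]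
    exact abs_le.mpr ⟨hu.1.le, hu.2⟩
  calc ‖φ i u * g i u‖ ≤ C / (1 + u ^ 2) ^ 2 * (B * (1 + u ^ 2)) := by
        rw [norm_mul]
        exact mul_le_mul (hφi u hu') (hgi u) (norm_nonneg _)
          ((norm_nonneg _).trans (hφi u hu'))
    _ = C * B * (1 + u ^ 2)⁻¹ := by
        have : 1 + u ^ 2 ≠ 0 := by positivity
        field_simp
    _ ≤ |C * B| * (1 + u ^ 2)⁻¹ := by gcongr; exact le_abs_self _

lemma tendsto_integral_mul [l.IsCountablyGenerated] (hφ : IsLaplaceFamily φ h l b C)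
    {g : ι → ℝ → ℂ} {g₀ : ℝ → ℂ} {B : ℝ} (hcont : ∀ i, Continuous (g i))
    (hg : ∀ᶠ i in l, ∀ u, ‖g i u‖ ≤ B * (1 + u ^ 2))
    (hlim : ∀ u, Tendsto (g · u) l (𝓝 (g₀ u))) :
    Tendsto (fun i ↦ ∫ u in -(π / h i)..π / h i, φ i u * g i u) l
      (𝓝 (∫ u : ℝ, (exp (-b * u ^ 2) : ℝ) * g₀ u)) := by
  have hindicator : ∀ᶠ i in l,
      ∫ u, (Set.Ioc (-(π / h i)) (π / h i)).indicator (fun u ↦ φ i u * g i u) u =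
        ∫ u in -(π / h i)..π / h i, φ i u * g i u := by
    filter_upwards [hφ.eventually_scale_pos] with i hi
    rw [intervalIntegral.integral_of_le (neg_le_self (by positivity)),
      integral_indicator measurableSet_Ioc]
  refine (tendsto_integral_filter_of_dominated_convergence _ ?_
    ((hφ.eventually_norm_indicator_le hg).mono fun i hi ↦ .of_forall hi)
    (integrable_inv_one_add_sq.const_mul _) (.of_forall fun u ↦ ?_)).congr' hindicator
  · filter_upwards [hφ.continuous] with i hi
    exact (hi.mul (hcont i)).aestronglyMeasurable.indicator measurableSet_Ioc
  · have hbig : Tendsto (fun i ↦ π / h i) l atTop := by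
      simpa only [div_eq_mul_inv, Function.comp_def] using
        (tendsto_inv_nhdsGT_zero.comp hφ.tendsto_scale).const_mul_atTop pi_pos
    refine ((hφ.tendsto u).mul (hlim u)).congr' ?_
    filter_upwards [hbig.eventually_gt_atTop |u|] with i hi
    exact (Set.indicator_of_mem (Set.Ioo_subset_Ioc_self (abs_lt.mp hi))
      (fun u ↦ φ i u * g i u)).symm

end IsLaplaceFamily

/-- The integral of `φ i` over `|h i * u| ≤ π` against the character of frequency `-κ * h i`. -/
noncomputable def shiftedIntegral (φ : ι → ℝ → ℂ) (h : ι → ℝ) (κ : ℝ) (i : ι) : ℂ :=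
  ∫ u in -(π / h i)..π / h i, φ i u * Complex.exp ((-κ * u * h i : ℝ) * Complex.I)

lemma shiftedIntegral_zero (φ : ι → ℝ → ℂ) (h : ι → ℝ) (i : ι) :
    shiftedIntegral φ h 0 i = ∫ u in -(π / h i)..π / h i, φ i u := by
  simp [shiftedIntegral]

variable {i : ι}

lemma intervalIntegrable_mul_exp_mul_I (hi : Continuous (φ i)) (κ a₁ a₂ : ℝ) :
    IntervalIntegrable (fun u ↦ φ i u * Complex.exp ((-κ * u * h i : ℝ) * Complex.I))
      volume a₁ a₂ :=
  Continuous.intervalIntegrable (by fun_prop) _ _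

lemma shiftedIntegral_sub_div (hi : Continuous (φ i)) (κ : ℝ) :
    (shiftedIntegral φ h κ i - shiftedIntegral φ h 0 i) / h i =
      ∫ u in -(π / h i)..π / h i,
        φ i u * ((Complex.exp ((-κ * u * h i : ℝ) * Complex.I) - 1) / h i) := by
  rw [shiftedIntegral_zero, shiftedIntegral, ← intervalIntegral.integral_sub
    (intervalIntegrable_mul_exp_mul_I hi ..) (hi.intervalIntegrable ..),
    ← intervalIntegral.integral_div]
  refine intervalIntegral.integral_congr fun u _ ↦ ?_
  ring

lemma shiftedIntegral_second_difference_div (hi : Continuous (φ i)) (κ : ℝ) :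
    (shiftedIntegral φ h κ i + shiftedIntegral φ h (-κ) i - 2 * shiftedIntegral φ h 0 i) /
        (h i : ℂ) ^ 2 =
      ∫ u in -(π / h i)..π / h i, φ i u *
        -((‖(Complex.exp ((-κ * u * h i : ℝ) * Complex.I) - 1) / h i‖ ^ 2 : ℝ) : ℂ) := by
  have hint (κ : ℝ) := intervalIntegrable_mul_exp_mul_I (h := h) hi κ (-(π / h i)) (π / h i)
  rw [shiftedIntegral_zero, shiftedIntegral, shiftedIntegral,
    ← intervalIntegral.integral_const_mul, ← intervalIntegral.integral_add (hint κ) (hint (-κ)),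
    ← intervalIntegral.integral_sub ((hint κ).add (hint (-κ)))
      ((hi.intervalIntegrable _ _).const_mul 2), ← intervalIntegral.integral_div]
  refine intervalIntegral.integral_congr fun u _ ↦ ?_
  have hcos := exp_mul_I_add_exp_neg_mul_I_sub_two (-κ * u * h i)
  rw [show -(-κ * u * h i) = -(-κ) * u * h i by ring] at hcos
  simp only [norm_div, div_pow, Complex.norm_real, Real.norm_eq_abs, sq_abs, Complex.ofReal_div]
  rw [← neg_div, ← hcos, Complex.ofReal_pow]
  ring

namespace IsLaplaceFamily

variable [l.IsCountablyGenerated]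

lemma tendsto_shiftedIntegral_zero (hφ : IsLaplaceFamily φ h l b C) :
    Tendsto (shiftedIntegral φ h 0) l (𝓝 (∫ u : ℝ, exp (-b * u ^ 2) : ℝ)) := by
  have hlim := hφ.tendsto_integral_mul (g := fun _ _ ↦ 1) (g₀ := fun _ ↦ 1) (B := 1)
    (fun _ ↦ continuous_const) (.of_forall fun _ u ↦ by simp [sq_nonneg])
    (fun _ ↦ tendsto_const_nhds)
  simp only [mul_one] at hlim
  rw [integral_complex_ofReal] at hlim
  exact hlim.congr fun i ↦ (shiftedIntegral_zero φ h i).symm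

lemma tendsto_shiftedIntegral_sub_div (hφ : IsLaplaceFamily φ h l b C) (κ : ℝ) :
    Tendsto (fun i ↦ (shiftedIntegral φ h κ i - shiftedIntegral φ h 0 i) / (h i : ℂ)) l
      (𝓝 0) := by
  have hlim := hφ.tendsto_integral_mul
    (g := fun i u ↦ (Complex.exp ((-κ * u * h i : ℝ) * Complex.I) - 1) / h i)
    (g₀ := fun u ↦ (-κ * u : ℝ) * Complex.I) (B := |κ|) (fun _ ↦ by fun_prop)
    (by
      filter_upwards [hφ.eventually_scale_pos] with i hi u
      refine (norm_exp_mul_I_sub_one_div_le hi _).trans ?_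
      rw [abs_mul, abs_neg]
      gcongr
      nlinarith [sq_abs u, sq_nonneg (|u| - 1)])
    (fun u ↦ (tendsto_exp_mul_I_sub_one_div (-κ * u)).comp hφ.tendsto_scale)
  have hzero : ∫ u : ℝ, ((exp (-b * u ^ 2) : ℝ) : ℂ) * ((-κ * u : ℝ) * Complex.I) = 0 := by
    have hterm (u : ℝ) : ((exp (-b * u ^ 2) : ℝ) : ℂ) * ((-κ * u : ℝ) * Complex.I) =
        -κ * Complex.I * (u * exp (-b * u ^ 2) : ℝ) := by
      push_cast
      ring
    simp_rw [hterm]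
    rw [integral_const_mul, integral_complex_ofReal, integral_mul_gaussian, Complex.ofReal_zero,
      mul_zero]
  rw [hzero] at hlim
  exact hlim.congr' (hφ.continuous.mono fun i hi ↦ (shiftedIntegral_sub_div hi κ).symm)

lemma tendsto_shiftedIntegral_second_difference (hφ : IsLaplaceFamily φ h l b C) (hb : 0 < b)
    (κ : ℝ) :
    Tendsto (fun i ↦ (shiftedIntegral φ h κ i + shiftedIntegral φ h (-κ) i -
        2 * shiftedIntegral φ h 0 i) / (h i : ℂ) ^ 2) l
      (𝓝 ((-(κ ^ 2 / (2 * b) * ∫ u : ℝ, exp (-b * u ^ 2)) : ℝ) : ℂ)) := by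
  have hlim := hφ.tendsto_integral_mul (B := κ ^ 2)
    (g := fun i u ↦
      -((‖(Complex.exp ((-κ * u * h i : ℝ) * Complex.I) - 1) / h i‖ ^ 2 : ℝ) : ℂ))
    (g₀ := fun u ↦ -((‖(-κ * u : ℝ) * Complex.I‖ ^ 2 : ℝ) : ℂ)) (fun _ ↦ by fun_prop)
    (by
      filter_upwards [hφ.eventually_scale_pos] with i hi u
      rw [norm_neg, Complex.norm_real, Real.norm_of_nonneg (by positivity)]
      calc _ ≤ |-κ * u| ^ 2 := by gcongr; exact norm_exp_mul_I_sub_one_div_le hi _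
        _ ≤ κ ^ 2 * (1 + u ^ 2) := by rw [sq_abs]; nlinarith [sq_nonneg κ])
    (fun u ↦ ((Complex.continuous_ofReal.tendsto _).comp
      (((tendsto_exp_mul_I_sub_one_div (-κ * u)).comp hφ.tendsto_scale).norm.pow 2)).neg)
  have hvalue : ∫ u : ℝ, ((exp (-b * u ^ 2) : ℝ) : ℂ) *
      -((‖(-κ * u : ℝ) * Complex.I‖ ^ 2 : ℝ) : ℂ) =
      (-(κ ^ 2 / (2 * b) * ∫ u : ℝ, exp (-b * u ^ 2)) : ℝ) := by
    have hterm (u : ℝ) : ((exp (-b * u ^ 2) : ℝ) : ℂ) *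
        -((‖(-κ * u : ℝ) * Complex.I‖ ^ 2 : ℝ) : ℂ) =
        (-κ ^ 2 * (u ^ 2 * exp (-b * u ^ 2)) : ℝ) := by
      rw [norm_mul, Complex.norm_I, mul_one, Complex.norm_real, Real.norm_eq_abs, sq_abs]
      push_cast
      ring
    simp_rw [hterm]
    rw [integral_complex_ofReal, integral_const_mul, integral_sq_mul_gaussian hb]
    congr 1
    ring
  rw [hvalue] at hlim
  exact hlim.congr' (hφ.continuous.mono fun i hi ↦
    (shiftedIntegral_second_difference_div hi κ).symm)

lemma eventually_shiftedIntegral_zero_ne_zero (hφ : IsLaplaceFamily φ h l b C) (hb : 0 < b) :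
    ∀ᶠ i in l, shiftedIntegral φ h 0 i ≠ 0 :=
  hφ.tendsto_shiftedIntegral_zero.eventually_ne (integral_gaussian_ofReal_ne_zero hb)

lemma tendsto_shiftedIntegral_div_sub_one_div (hφ : IsLaplaceFamily φ h l b C) (hb : 0 < b)
    (κ : ℝ) :
    Tendsto (fun i ↦ (shiftedIntegral φ h κ i / shiftedIntegral φ h 0 i - 1) / (h i : ℂ)) l
      (𝓝 0) := by
  have hlim := (hφ.tendsto_shiftedIntegral_sub_div κ).div hφ.tendsto_shiftedIntegral_zero
    (integral_gaussian_ofReal_ne_zero hb)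
  rw [zero_div] at hlim
  refine hlim.congr' ?_
  filter_upwards [hφ.eventually_shiftedIntegral_zero_ne_zero hb] with i hi
  rw [Pi.div_apply, div_right_comm, sub_div, div_self hi]

lemma tendsto_shiftedIntegral_mul_div_sub_one_div (hφ : IsLaplaceFamily φ h l b C) (hb : 0 < b)
    (κ : ℝ) :
    Tendsto (fun i ↦ (shiftedIntegral φ h κ i * shiftedIntegral φ h (-κ) i /
      shiftedIntegral φ h 0 i ^ 2 - 1) / (h i : ℂ) ^ 2) l (𝓝 ((-(κ ^ 2 / (2 * b)) : ℝ) : ℂ)) := by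
  have hG := integral_gaussian_ofReal_ne_zero hb
  have hlim := ((hφ.tendsto_shiftedIntegral_second_difference hb κ).div
    hφ.tendsto_shiftedIntegral_zero hG).add
      ((hφ.tendsto_shiftedIntegral_div_sub_one_div hb κ).mul
        (hφ.tendsto_shiftedIntegral_div_sub_one_div hb (-κ)))
  rw [mul_zero, add_zero, ← neg_mul, Complex.ofReal_mul, mul_div_cancel_right₀ _ hG] at hlim
  refine hlim.congr' ?_
  filter_upwards [hφ.eventually_shiftedIntegral_zero_ne_zero hb] with i hi
  rw [Pi.div_apply]
  field_simp
  ring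

end IsLaplaceFamily

end LaplaceMethod

section SaddlePoint

/-- The width of the saddle in the angular variable, of order `x ^ (3 / 2)`. -/
noncomputable def saddleWidth (x : ℝ) : ℝ := x * √x

/-- The normalized Cauchy integrand on the circle of radius `exp (-x)`, at angle
`saddleWidth x * u`, for the coefficient whose index `moment 1 x` makes the linear term vanish. -/
noncomputable def saddlePhase (x u : ℝ) : ℂ :=
  Complex.exp (logRatio x (saddleWidth x * u) -
    (saddleWidth x * u * moment 1 x : ℝ) * Complex.I)

variable {x : ℝ}

lemma saddleWidth_pos (hx : 0 < x) : 0 < saddleWidth x := by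
  unfold saddleWidth
  positivity

lemma saddleWidth_sq (hx : 0 ≤ x) : saddleWidth x ^ 2 = x ^ 3 := by
  rw [saddleWidth, mul_pow, sq_sqrt hx]
  ring

lemma tendsto_saddleWidth : Tendsto saddleWidth (𝓝[>] 0) (𝓝[>] 0) := by
  refine tendsto_nhdsWithin_iff.mpr ⟨?_, ?_⟩
  · refine (Continuous.tendsto' (by unfold saddleWidth; fun_prop) 0 0 ?_).mono_left
      nhdsWithin_le_nhds
    simp [saddleWidth]
  · filter_upwards [self_mem_nhdsWithin] with x hx using saddleWidth_pos hx

lemma continuous_saddlePhase (hx : 0 < x) : Continuous (saddlePhase x) := by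
  have := continuous_logRatio hx
  unfold saddlePhase
  fun_prop

lemma norm_saddlePhase_le (hx₀ : 0 < x) (hx₁ : x ≤ 1) {u : ℝ} (hu : |saddleWidth x * u| ≤ π) :
    ‖saddlePhase x u‖ ≤
      32 ^ 2 * (Nat.factorial 6 * exp 1) / (2 / (π ^ 2 * exp 1)) ^ 2 / (1 + u ^ 2) ^ 2 := by
  have hexp : 2 ≤ exp 1 := by linarith [add_one_le_exp (1 : ℝ)]
  set c := 2 / (π ^ 2 * exp 1) with hc
  have hc₀ : 0 < c := by positivity
  have hcπ : c * π ^ 2 ≤ 1 := by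
    rw [hc, div_mul_eq_mul_div, mul_comm (π ^ 2), mul_div_mul_right _ _ (by positivity)]
    exact (div_le_one (exp_pos 1)).mpr hexp
  have hc₁ : c ≤ 1 := by nlinarith [pi_gt_three]
  have hsq : (saddleWidth x * u) ^ 2 = x ^ 3 * u ^ 2 := by rw [mul_pow, saddleWidth_sq hx₀.le]
  have hxu : x ^ 3 * (c * u ^ 2) ≤ 1 := by
    calc x ^ 3 * (c * u ^ 2) = c * |saddleWidth x * u| ^ 2 := by rw [sq_abs, hsq]; ring
      _ ≤ c * π ^ 2 := by gcongr
      _ ≤ 1 := hcπ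
  have hre : (logRatio x (saddleWidth x * u)).re ≤
      -(c * u ^ 2 / (1 + 2 * x * (c * u ^ 2))) := by
    refine (re_logRatio_le_neg_div hx₀ (by positivity)
      (mul_sq_le_exp_neg_mul_one_sub_cos hx₁ hu)).trans_eq ?_
    rw [← hc, hsq]
    have : 1 + 2 * x * (c * u ^ 2) ≠ 0 := by positivity
    field_simp
  calc ‖saddlePhase x u‖ = exp (logRatio x (saddleWidth x * u)).re := by
        rw [saddlePhase, Complex.norm_exp, Complex.sub_re, Complex.re_ofReal_mul, Complex.I_re,
          mul_zero, sub_zero]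
    _ ≤ exp (-(c * u ^ 2 / (1 + 2 * x * (c * u ^ 2)))) := exp_le_exp.mpr hre
    _ ≤ 32 ^ 2 * (Nat.factorial 6 * exp 1) / (1 + c * u ^ 2) ^ 2 :=
        exp_neg_div_le hx₀.le (by positivity) hxu
    _ ≤ 32 ^ 2 * (Nat.factorial 6 * exp 1) / (c * (1 + u ^ 2)) ^ 2 := by
        gcongr
        linarith
    _ = 32 ^ 2 * (Nat.factorial 6 * exp 1) / c ^ 2 / (1 + u ^ 2) ^ 2 := by
        rw [mul_pow, div_mul_eq_div_div]

lemma tendsto_logRatio_saddle (u : ℝ) :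
    Tendsto (fun x ↦ logRatio x (saddleWidth x * u) - ((saddleWidth x * u * moment 1 x : ℝ) *
      Complex.I - (u ^ 2 / 2 * (x ^ 3 * moment 2 x) : ℝ))) (𝓝[>] 0) (𝓝 0) := by
  have hbound : Tendsto (fun x : ℝ ↦ 4 * |u| ^ 3 * √x * (x ^ 4 * moment 3 x)) (𝓝[>] 0) (𝓝 0) := by
    have hsqrt : Tendsto (fun x : ℝ ↦ 4 * |u| ^ 3 * √x) (𝓝[>] 0) (𝓝 0) :=
      (Continuous.tendsto' (by fun_prop) 0 0 (by simp)).mono_left nhdsWithin_le_nhds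
    simpa using hsqrt.mul (tendsto_pow_mul_moment three_ne_zero)
  refine squeeze_zero_norm' ?_ hbound
  filter_upwards [self_mem_nhdsWithin] with x (hx : 0 < x)
  have hlog := norm_logRatio_sub_le hx (saddleWidth x * u)
  rw [mul_pow, saddleWidth_sq hx.le] at hlog
  convert hlog using 1
  · congr 4
    ring
  · rw [abs_mul, abs_of_pos (saddleWidth_pos hx), mul_pow, pow_succ (saddleWidth x),
      saddleWidth_sq hx.le, saddleWidth]
    ring

lemma tendsto_saddlePhase (u : ℝ) :
    Tendsto (saddlePhase · u) (𝓝[>] 0) (𝓝 (exp (-(π ^ 2 / 6) * u ^ 2) : ℝ)) := by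
  have hquadratic := (Complex.continuous_ofReal.tendsto _).comp
    ((tendsto_pow_mul_moment two_ne_zero).const_mul (u ^ 2 / 2))
  have hlim := ((tendsto_logRatio_saddle u).sub hquadratic).cexp
  have hvalue : u ^ 2 / 2 * (π ^ 2 / 6 * (Nat.factorial 2 : ℝ)) = -(-(π ^ 2 / 6) * u ^ 2) := by
    rw [Nat.factorial_two]
    push_cast
    ring
  rw [hvalue, zero_sub, Complex.ofReal_neg, neg_neg, ← Complex.ofReal_exp] at hlim
  refine hlim.congr fun x ↦ ?_
  rw [saddlePhase]
  congr 1
  simp only [Function.comp_apply]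
  ring

lemma isLaplaceFamily_saddlePhase :
    IsLaplaceFamily saddlePhase saddleWidth (𝓝[>] 0) (π ^ 2 / 6)
      (32 ^ 2 * (Nat.factorial 6 * exp 1) / (2 / (π ^ 2 * exp 1)) ^ 2) where
  tendsto_scale := tendsto_saddleWidth
  continuous := by filter_upwards [self_mem_nhdsWithin] with x hx using continuous_saddlePhase hx
  norm_le := by
    filter_upwards [self_mem_nhdsWithin, nhdsWithin_le_nhds (eventually_le_nhds zero_lt_one)]
      with x hx₀ hx₁ u hu using norm_saddlePhase_le hx₀ hx₁ hu
  tendsto := tendsto_saddlePhase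

lemma integral_exp_int_mul_I (k : ℤ) :
    ∫ y in -π..π, Complex.exp ((k * y : ℝ) * Complex.I) = if k = 0 then 2 * (π : ℂ) else 0 := by
  split_ifs with hk
  · simp [hk, two_mul]
  · have hk' : (k * Complex.I : ℂ) ≠ 0 := mul_ne_zero (mod_cast hk) Complex.I_ne_zero
    have hcomm (y : ℝ) : ((k * y : ℝ) : ℂ) * Complex.I = k * Complex.I * y := by
      push_cast
      ring
    simp_rw [hcomm]
    rw [integral_exp_mul_complex hk', div_eq_zero_iff, sub_eq_zero]
    refine .inl (Complex.exp_eq_exp_iff_exists_int.mpr ⟨k, ?_⟩)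
    push_cast
    ring

lemma integral_tsum_mul_exp_mul_I {a : ℕ → ℂ} (ha : Summable fun n ↦ ‖a n‖) (m : ℕ) :
    ∫ y in -π..π, (∑' n : ℕ, a n * Complex.exp ((n * y : ℝ) * Complex.I)) *
      Complex.exp ((-m * y : ℝ) * Complex.I) = 2 * π * a m := by
  have hexp (n : ℕ) (y : ℝ) : a n * Complex.exp ((n * y : ℝ) * Complex.I) *
      Complex.exp ((-m * y : ℝ) * Complex.I) =
        a n * Complex.exp ((((n : ℤ) - m : ℤ) * y : ℝ) * Complex.I) := by
    rw [mul_assoc, ← Complex.exp_add]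
    push_cast
    ring_nf
  have hcoeff (n : ℕ) : ∫ y in -π..π, a n * Complex.exp ((n * y : ℝ) * Complex.I) *
      Complex.exp ((-m * y : ℝ) * Complex.I) = if n = m then 2 * π * a m else 0 := by
    simp_rw [hexp, intervalIntegral.integral_const_mul, integral_exp_int_mul_I, sub_eq_zero,
      Nat.cast_inj]
    split_ifs with h
    · rw [h, mul_comm]
    · rw [mul_zero]
  have hnorm (n : ℕ) (y : ℝ) : ‖a n * Complex.exp ((n * y : ℝ) * Complex.I)‖ = ‖a n‖ := by
    rw [norm_mul, Complex.norm_exp_ofReal_mul_I, mul_one]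
  have hsum := intervalIntegral.hasSum_integral_of_dominated_convergence (a := -π) (b := π)
    (μ := volume) (F := fun n y ↦ a n * Complex.exp ((n * y : ℝ) * Complex.I) *
      Complex.exp ((-m * y : ℝ) * Complex.I)) (fun n _ ↦ ‖a n‖)
    (fun n ↦ Continuous.aestronglyMeasurable (by fun_prop))
    (fun n ↦ .of_forall fun y _ ↦ by
      rw [norm_mul, hnorm, Complex.norm_exp_ofReal_mul_I, mul_one])
    (.of_forall fun _ _ ↦ ha) intervalIntegrable_const
    (.of_forall fun y _ ↦ (Summable.of_norm (by simpa only [hnorm] using ha)).hasSum.mul_right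
      (Complex.exp ((-m * y : ℝ) * Complex.I)))
  simp_rw [hcoeff] at hsum
  exact hsum.unique (hasSum_ite_eq m _)

lemma two_pi_mul_p_mul_exp_neg_eq_integral (hx : 0 < x) (m : ℕ) :
    2 * π * (p m * exp (-(m * x)) : ℝ) = exp (moment 0 x) *
      ∫ y in -π..π, Complex.exp (logRatio x y) * Complex.exp ((-m * y : ℝ) * Complex.I) := by
  have hsum : Summable fun n ↦ ‖((p n * exp (-x) ^ n : ℝ) : ℂ)‖ := by
    simpa only [Complex.norm_real] using
      (summable_p_mul_pow (exp_pos (-x)).le (exp_neg_lt_one hx)).norm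
  have hterm (n : ℕ) (y : ℝ) : ((p n * exp (-x) ^ n : ℝ) : ℂ) *
      Complex.exp ((n * y : ℝ) * Complex.I) =
        p n * Complex.exp (-x + y * Complex.I) ^ n := by
    rw [Complex.exp_add, mul_pow, ← Complex.exp_nat_mul (y * Complex.I)]
    push_cast
    ring_nf
  have hcauchy := integral_tsum_mul_exp_mul_I hsum m
  simp_rw [hterm, tsum_p_mul_exp_pow hx, mul_assoc (exp (moment 0 x) : ℂ)] at hcauchy
  rw [← intervalIntegral.integral_const_mul, hcauchy, ← exp_nat_mul, mul_neg]

lemma p_mul_exp_neg_eq_shiftedIntegral (hx : 0 < x) (m : ℕ) :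
    ((p m * exp (-(m * x)) : ℝ) : ℂ) = exp (moment 0 x) * saddleWidth x / (2 * π) *
      shiftedIntegral saddlePhase saddleWidth (m - moment 1 x) x := by
  have hw := (saddleWidth_pos hx).ne'
  have hscale := intervalIntegral.smul_integral_comp_mul_left (a := -(π / saddleWidth x))
    (b := π / saddleWidth x)
    (fun y : ℝ ↦ Complex.exp (logRatio x y) * Complex.exp ((-m * y : ℝ) * Complex.I))
    (saddleWidth x)
  have hphase (u : ℝ) : Complex.exp (logRatio x (saddleWidth x * u)) *
      Complex.exp ((-m * (saddleWidth x * u) : ℝ) * Complex.I) = saddlePhase x u *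
        Complex.exp ((-(m - moment 1 x) * u * saddleWidth x : ℝ) * Complex.I) := by
    rw [saddlePhase, ← Complex.exp_add, ← Complex.exp_add]
    congr 1
    push_cast
    ring
  rw [mul_neg, mul_div_cancel₀ _ hw, Complex.real_smul] at hscale
  simp_rw [hphase] at hscale
  have hπ : (2 * π : ℂ) ≠ 0 := mul_ne_zero two_ne_zero (mod_cast pi_ne_zero)
  rw [← mul_right_inj' hπ, two_pi_mul_p_mul_exp_neg_eq_integral hx, ← hscale, shiftedIntegral,
    ← mul_assoc (2 * π : ℂ), mul_div_cancel₀ _ hπ, mul_assoc]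

lemma p_div_p_mul_exp_eq_shiftedIntegral_div (hx : 0 < x) {n : ℕ} (hn : moment 1 x = n) (m : ℕ) :
    ((p m / p n * exp ((n - m) * x) : ℝ) : ℂ) =
      shiftedIntegral saddlePhase saddleWidth (m - n) x /
        shiftedIntegral saddlePhase saddleWidth 0 x := by
  have hm := p_mul_exp_neg_eq_shiftedIntegral hx m
  have hn' := p_mul_exp_neg_eq_shiftedIntegral hx n
  rw [hn] at hm hn'
  rw [sub_self] at hn'
  have hsplit : p m / p n * exp ((n - m) * x) = p m * exp (-(m * x)) / (p n * exp (-(n * x))) := by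
    rw [mul_div_mul_comm, ← exp_sub]
    ring_nf
  have hfactor : (exp (moment 0 x) * saddleWidth x / (2 * π) : ℂ) ≠ 0 := by
    have := saddleWidth_pos hx
    exact_mod_cast (by positivity : exp (moment 0 x) * saddleWidth x / (2 * π) ≠ 0)
  rw [hsplit, Complex.ofReal_div, hm, hn', mul_div_mul_left _ _ hfactor]

end SaddlePoint

section IntegralSaddlePoints

lemma antitoneOn_moment (j : ℕ) : AntitoneOn (moment j) (Set.Ioi 0) := by
  intro x hx y hy hxy
  refine (summable_moment j hy).tsum_le_tsum (fun n ↦ ?_) (summable_moment j hx)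
  have := abundancyIndex_nonneg n
  gcongr

lemma continuousOn_moment (j : ℕ) : ContinuousOn (moment j) (Set.Ioi 0) := by
  intro x (hx : 0 < x)
  refine ContinuousAt.continuousWithinAt (ContinuousOn.continuousAt (s := Set.Ici (x / 2)) ?_
    (Ici_mem_nhds (half_lt_self hx)))
  refine continuousOn_tsum (fun n ↦ by fun_prop) (summable_moment j (half_pos hx))
    fun n y (hy : x / 2 ≤ y) ↦ ?_
  have := abundancyIndex_nonneg n
  rw [Real.norm_of_nonneg (by positivity)]
  gcongr

lemma tendsto_moment_one_atTop : Tendsto (moment 1) (𝓝[>] 0) atTop := by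
  have hpow : Tendsto (fun x : ℝ ↦ (x ^ 2)⁻¹) (𝓝[>] 0) atTop := by
    simpa only [inv_pow, Function.comp_def] using
      (tendsto_pow_atTop two_ne_zero).comp (tendsto_inv_nhdsGT_zero (𝕜 := ℝ))
  refine (((tendsto_pow_mul_moment one_ne_zero).pos_mul_atTop (by positivity) hpow)).congr' ?_
  filter_upwards [self_mem_nhdsWithin] with x (hx : 0 < x)
  rw [one_add_one_eq_two, mul_comm, inv_mul_cancel_left₀ (by positivity)]

lemma exists_tendsto_nhdsGT_zero_eventually_eq_natCast {g : ℝ → ℝ}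
    (hcont : ContinuousOn g (Set.Ioi 0)) (hanti : AntitoneOn g (Set.Ioi 0))
    (hlim : Tendsto g (𝓝[>] 0) atTop) :
    ∃ x : ℕ → ℝ, Tendsto x atTop (𝓝[>] 0) ∧ ∀ᶠ n : ℕ in atTop, g (x n) = n := by
  have hsolve : ∀ᶠ n : ℕ in atTop, ∃ x, 0 < x ∧ g x = n := by
    filter_upwards [tendsto_natCast_atTop_atTop.eventually_ge_atTop (g 1)] with n hn
    obtain ⟨δ, hδn, hδ⟩ := ((hlim.eventually_ge_atTop (n : ℝ)).and
      (Ioc_mem_nhdsGT zero_lt_one)).exists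
    obtain ⟨x, hx, hxn⟩ := intermediate_value_Icc' hδ.2
      (hcont.mono fun y hy ↦ hδ.1.trans_le hy.1) ⟨hn, hδn⟩
    exact ⟨x, hδ.1.trans_le hx.1, hxn⟩
  obtain ⟨x, hx⟩ := hsolve.choice
  refine ⟨x, tendsto_nhdsWithin_iff.mpr ⟨?_, hx.mono fun n hn ↦ hn.1⟩, hx.mono fun n hn ↦ hn.2⟩
  refine tendsto_order.mpr ⟨fun a ha ↦ hx.mono fun n hn ↦ ha.trans hn.1, fun δ hδ ↦ ?_⟩
  filter_upwards [hx, tendsto_natCast_atTop_atTop.eventually_gt_atTop (g δ)] with n hn hδn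
  by_contra! hle
  exact (hδn.trans_le (hn.2.symm.le.trans (hanti hδ hn.1 hle))).false

lemma exists_saddlePoint : ∃ x : ℕ → ℝ, Tendsto x atTop (𝓝[>] 0) ∧
    ∀ᶠ n : ℕ in atTop, moment 1 (x n) = n :=
  exists_tendsto_nhdsGT_zero_eventually_eq_natCast (continuousOn_moment 1) (antitoneOn_moment 1)
    tendsto_moment_one_atTop

/-- The saddle point of the Cauchy integral for `p n`: for large `n`, the `x > 0` with
`moment 1 x = n`. -/
noncomputable def saddlePoint : ℕ → ℝ := exists_saddlePoint.choose

lemma tendsto_saddlePoint : Tendsto saddlePoint atTop (𝓝[>] 0) :=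
  exists_saddlePoint.choose_spec.1

lemma eventually_moment_one_saddlePoint : ∀ᶠ n : ℕ in atTop, moment 1 (saddlePoint n) = n :=
  exists_saddlePoint.choose_spec.2

lemma eventually_saddlePoint_pos : ∀ᶠ n in atTop, 0 < saddlePoint n :=
  tendsto_saddlePoint.eventually self_mem_nhdsWithin

lemma tendsto_sqrt_mul_saddlePoint :
    Tendsto (fun n : ℕ ↦ √n * saddlePoint n) atTop (𝓝 (π / √6)) := by
  have hlim := ((tendsto_pow_mul_moment one_ne_zero).comp tendsto_saddlePoint).sqrt
  rw [Nat.factorial_one, Nat.cast_one, mul_one, sqrt_div (sq_nonneg π), sqrt_sq pi_pos.le] at hlim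
  refine hlim.congr' ?_
  filter_upwards [eventually_saddlePoint_pos, eventually_moment_one_saddlePoint] with n hpos hn
  rw [Function.comp_apply, hn, sqrt_mul (by positivity), sqrt_sq hpos.le, mul_comm]

end IntegralSaddlePoints

section LogPartition

lemma tendsto_log_div {ι : Type*} {l : Filter ι} {r w : ι → ℝ} {a : ℝ} (hw : ∀ᶠ i in l, 0 < w i)
    (hw₀ : Tendsto w l (𝓝 0)) (hr : Tendsto (fun i ↦ (r i - 1) / w i) l (𝓝 a)) :
    Tendsto (fun i ↦ log (r i) / w i) l (𝓝 a) := by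
  have hr₁ : Tendsto r l (𝓝 1) := by
    have hlim := (hr.mul hw₀).add_const 1
    rw [mul_zero, zero_add] at hlim
    refine hlim.congr' ?_
    filter_upwards [hw] with i hi
    rw [div_mul_cancel₀ _ hi.ne', sub_add_cancel]
  have hlower : Tendsto (fun i ↦ (r i - 1) / w i / r i) l (𝓝 a) := by
    simpa only [div_one, Pi.div_def] using hr.div hr₁ one_ne_zero
  refine tendsto_of_tendsto_of_tendsto_of_le_of_le' hlower hr ?_ ?_
  · filter_upwards [hw, hr₁.eventually_const_lt zero_lt_one] with i hi hri
    rw [div_right_comm, sub_div, div_self hri.ne', one_div]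
    gcongr
    exact one_sub_inv_le_log_of_pos hri
  · filter_upwards [hw, hr₁.eventually_const_lt zero_lt_one] with i hi hri
    gcongr
    exact log_le_sub_one_of_pos hri

lemma tendsto_saddleWidth_saddlePoint :
    Tendsto (fun n ↦ saddleWidth (saddlePoint n)) atTop (𝓝[>] 0) :=
  tendsto_saddleWidth.comp tendsto_saddlePoint

lemma eventually_saddleWidth_saddlePoint_pos : ∀ᶠ n in atTop, 0 < saddleWidth (saddlePoint n) :=
  tendsto_saddleWidth_saddlePoint.eventually self_mem_nhdsWithin

lemma tendsto_log_p_succ_sub_sub_saddlePoint_div :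
    Tendsto (fun n : ℕ ↦ (log (p (n + 1)) - log (p n) - saddlePoint n) /
      saddleWidth (saddlePoint n)) atTop (𝓝 0) := by
  have hratio : Tendsto (fun n : ℕ ↦ (p (n + 1) / p n * exp (-saddlePoint n) - 1) /
      saddleWidth (saddlePoint n)) atTop (𝓝 0) := by
    rw [← tendsto_ofReal_iff]
    refine ((isLaplaceFamily_saddlePhase.tendsto_shiftedIntegral_div_sub_one_div (by positivity)
      1).comp tendsto_saddlePoint).congr' ?_
    filter_upwards [eventually_saddlePoint_pos, eventually_moment_one_saddlePoint] with n hpos hn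
    have hquot := p_div_p_mul_exp_eq_shiftedIntegral_div hpos hn (n + 1)
    rw [Nat.cast_add_one, add_sub_cancel_left, sub_add_cancel_left, neg_one_mul] at hquot
    rw [Function.comp_apply, ← hquot]
    norm_cast
  refine (tendsto_log_div eventually_saddleWidth_saddlePoint_pos
    (tendsto_nhds_of_tendsto_nhdsWithin tendsto_saddleWidth_saddlePoint) hratio).congr fun n ↦ ?_
  have hp := p_pos n
  have hp' := p_pos (n + 1)
  rw [log_mul (by positivity) (by positivity), log_div hp'.ne' hp.ne', log_exp, ← sub_eq_add_neg]

lemma tendsto_sqrt_mul_log_p_succ_sub :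
    Tendsto (fun n : ℕ ↦ √n * (log (p (n + 1)) - log (p n))) atTop (𝓝 (π / √6)) := by
  have hsqrt : Tendsto (fun n ↦ √(saddlePoint n)) atTop (𝓝 0) := by
    simpa using (tendsto_nhds_of_tendsto_nhdsWithin tendsto_saddlePoint).sqrt
  have hlim := tendsto_sqrt_mul_saddlePoint.add
    ((tendsto_log_p_succ_sub_sub_saddlePoint_div.mul hsqrt).mul tendsto_sqrt_mul_saddlePoint)
  rw [zero_mul, zero_mul, add_zero] at hlim
  refine hlim.congr' ?_
  filter_upwards [eventually_saddlePoint_pos] with n hpos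
  rw [saddleWidth]
  field_simp
  ring

lemma tendsto_log_p_second_difference_div :
    Tendsto (fun n : ℕ ↦ (log (p (n + 1)) + log (p (n - 1)) - 2 * log (p n)) / saddlePoint n ^ 3)
      atTop (𝓝 (-(3 / π ^ 2))) := by
  have hratio : Tendsto (fun n : ℕ ↦ (p (n + 1) * p (n - 1) / p n ^ 2 - 1) / saddlePoint n ^ 3)
      atTop (𝓝 (-(1 ^ 2 / (2 * (π ^ 2 / 6))))) := by
    rw [← tendsto_ofReal_iff]
    refine ((isLaplaceFamily_saddlePhase.tendsto_shiftedIntegral_mul_div_sub_one_div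
      (by positivity) 1).comp tendsto_saddlePoint).congr' ?_
    filter_upwards [eventually_saddlePoint_pos, eventually_moment_one_saddlePoint,
      eventually_gt_atTop 0] with n hpos hn hn₀
    have hsucc := p_div_p_mul_exp_eq_shiftedIntegral_div hpos hn (n + 1)
    have hpred := p_div_p_mul_exp_eq_shiftedIntegral_div hpos hn (n - 1)
    rw [Nat.cast_add_one, add_sub_cancel_left, sub_add_cancel_left, neg_one_mul] at hsucc
    rw [Nat.cast_pred hn₀, sub_sub_cancel_left, sub_sub_cancel, one_mul] at hpred
    rw [Function.comp_apply, sq (shiftedIntegral _ _ _ _), mul_div_mul_comm, ← hsucc, ← hpred,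
      ← Complex.ofReal_pow, saddleWidth_sq hpos.le, ← Complex.ofReal_mul, mul_mul_mul_comm,
      ← exp_add, neg_add_cancel, exp_zero, mul_one, div_mul_div_comm, ← sq]
    norm_cast
  have hlog := tendsto_log_div (eventually_saddlePoint_pos.mono fun n hn ↦ pow_pos hn 3)
    (by simpa using (tendsto_nhds_of_tendsto_nhdsWithin tendsto_saddlePoint).pow 3) hratio
  convert hlog using 2 with n
  · have hsucc := p_pos (n + 1)
    have hpred := p_pos (n - 1)
    rw [log_div (by positivity) (pow_pos (p_pos n) 2).ne', log_mul hsucc.ne' hpred.ne', log_pow]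
    norm_cast
  · field_simp
    norm_num

lemma tendsto_sqrt_pow_three_mul_log_p_second_difference :
    Tendsto (fun n : ℕ ↦ √n ^ 3 * (log (p (n + 1)) + log (p (n - 1)) - 2 * log (p n))) atTop
      (𝓝 (-(π / √6) / 2)) := by
  have hlim := (tendsto_sqrt_mul_saddlePoint.pow 3).mul tendsto_log_p_second_difference_div
  have hvalue : (π / √6) ^ 3 * -(3 / π ^ 2) = -(π / √6) / 2 := by
    have h6 : √6 ^ 2 = (6 : ℝ) := sq_sqrt (by norm_num)
    rw [pow_succ, div_pow, h6]
    field_simp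
    norm_num
  rw [hvalue] at hlim
  refine hlim.congr' ?_
  filter_upwards [eventually_saddlePoint_pos] with n hpos
  field_simp

end LogPartition

section SequenceDifferences

lemma tendsto_div_of_tendsto_sub_div_sub {f g : ℕ → ℝ} {a : ℝ} (hmono : StrictMono g)
    (hg : Tendsto g atTop atTop)
    (hfg : Tendsto (fun n ↦ (f (n + 1) - f n) / (g (n + 1) - g n)) atTop (𝓝 a)) :
    Tendsto (fun n ↦ f n / g n) atTop (𝓝 a) := by
  have hpos (n : ℕ) : 0 < g (n + 1) - g n := sub_pos.mpr (hmono n.lt_succ_self)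
  have hdiff : (fun n ↦ f (n + 1) - f n - a * (g (n + 1) - g n)) =o[atTop]
      fun n ↦ g (n + 1) - g n := by
    rw [Asymptotics.isLittleO_iff_tendsto fun n hn ↦ absurd hn (hpos n).ne']
    refine (tendsto_sub_nhds_zero_iff.mpr hfg).congr fun n ↦ ?_
    rw [sub_div _ (a * _), mul_div_cancel_right₀ _ (hpos n).ne']
  have hsum := hdiff.sum_range (fun n ↦ (hpos n).le)
    (by
      simp only [Finset.sum_range_sub]
      exact tendsto_atTop_add_const_right _ (-g 0) hg)
  simp only [Finset.sum_sub_distrib _ fun _ ↦ a * _, ← Finset.mul_sum,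
    Finset.sum_range_sub] at hsum
  have hconst : (fun _ : ℕ ↦ g 0) =o[atTop] g :=
    (Asymptotics.isLittleO_const_id_atTop (g 0)).comp_tendsto hg
  have hquot := (hsum.trans_isBigO ((Asymptotics.isBigO_refl g atTop).sub
    hconst.isBigO)).tendsto_div_nhds_zero
  have hlim := (hquot.add (tendsto_const_nhds (x := f 0 - a * g 0).div_atTop hg)).add_const a
  rw [add_zero, zero_add] at hlim
  refine hlim.congr' ?_
  filter_upwards [hg.eventually_gt_atTop 0] with n hn
  field_simp
  ring

lemma tendsto_sqrt_mul_sqrt_succ_sub_sqrt :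
    Tendsto (fun n : ℕ ↦ √n * (√((n + 1 : ℕ) : ℝ) - √n)) atTop (𝓝 (1 / 2)) := by
  have hlim : Tendsto (fun n : ℕ ↦ 1 / (√(1 + 1 / (n : ℝ)) + 1)) atTop
      (𝓝 (1 / (√(1 + 0) + 1))) :=
    tendsto_const_nhds.div ((tendsto_one_div_atTop_nhds_zero_nat.const_add 1).sqrt.add_const 1)
      (by positivity)
  rw [add_zero, sqrt_one, one_add_one_eq_two] at hlim
  refine hlim.congr' ?_
  filter_upwards [eventually_gt_atTop 0] with n hn
  have hn₀ : (0 : ℝ) < n := mod_cast hn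
  have hsucc : √((n + 1 : ℕ) : ℝ) = √n * √(1 + 1 / (n : ℝ)) := by
    rw [← sqrt_mul hn₀.le]
    congr 1
    push_cast
    field_simp
  have hsq : √(1 + 1 / (n : ℝ)) ^ 2 = 1 + 1 / n := sq_sqrt (by positivity)
  have hsq' : √(n : ℝ) ^ 2 = n := sq_sqrt hn₀.le
  rw [hsucc, div_eq_iff (by positivity)]
  calc 1 = (n : ℝ) * (1 + 1 / n - 1) := by field_simp; ring
    _ = √n ^ 2 * (√(1 + 1 / (n : ℝ)) ^ 2 - 1) := by rw [hsq, hsq']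
    _ = _ := by ring

variable {f : ℕ → ℝ} {a c : ℝ}

lemma tendsto_div_sqrt_of_tendsto_sqrt_mul_sub
    (hf : Tendsto (fun n : ℕ ↦ √n * (f (n + 1) - f n)) atTop (𝓝 a)) :
    Tendsto (fun n : ℕ ↦ f n / √n) atTop (𝓝 (2 * a)) := by
  refine tendsto_div_of_tendsto_sub_div_sub (g := fun n : ℕ ↦ √n)
    (fun m n hmn ↦ sqrt_lt_sqrt m.cast_nonneg (mod_cast hmn))
    (tendsto_sqrt_atTop.comp tendsto_natCast_atTop_atTop) ?_
  have hlim := hf.div tendsto_sqrt_mul_sqrt_succ_sub_sqrt one_half_pos.ne'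
  rw [div_div_eq_mul_div, div_one, mul_comm] at hlim
  refine hlim.congr' ?_
  filter_upwards [eventually_gt_atTop 0] with n hn
  have hn₀ : 0 < √(n : ℝ) := sqrt_pos.mpr (mod_cast hn)
  rw [Pi.div_apply, mul_div_mul_left _ _ hn₀.ne']

lemma tendsto_sqrt_pow_five_mul_div_second_difference
    (hf : Tendsto (fun n : ℕ ↦ √n * (f (n + 1) - f n)) atTop (𝓝 a))
    (hf₂ : Tendsto (fun n : ℕ ↦ √n ^ 3 * (f (n + 1) + f (n - 1) - 2 * f n)) atTop (𝓝 c)) :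
    Tendsto (fun n : ℕ ↦ √n ^ 5 *
      (f (n + 1) / ((n : ℝ) + 1) + f (n - 1) / ((n : ℝ) - 1) - 2 * (f n / n))) atTop
      (𝓝 (2 * a + c)) := by
  have hinv := tendsto_one_div_atTop_nhds_zero_nat (𝕜 := ℝ)
  have hden : Tendsto (fun n : ℕ ↦ 1 - (1 / (n : ℝ)) ^ 2) atTop (𝓝 1) := by
    simpa using (hinv.pow 2).const_sub 1
  have hlim := (((tendsto_div_sqrt_of_tendsto_sqrt_mul_sub hf).const_mul 2).add
    ((hf₂.mul (hinv.const_sub 1)).sub ((hf.sub (hf₂.mul hinv)).const_mul 2))).div hden one_ne_zero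
  have hvalue : (2 * (2 * a) + (c * (1 - 0) - 2 * (a - c * 0))) / 1 = 2 * a + c := by ring
  rw [hvalue] at hlim
  refine hlim.congr' ?_
  filter_upwards [eventually_gt_atTop 1] with n hn
  have hn₁ : (1 : ℝ) < n := mod_cast hn
  have hsq : (n : ℝ) = √n ^ 2 := (sq_sqrt n.cast_nonneg).symm
  have hs : 0 < √(n : ℝ) := sqrt_pos.mpr (by linarith)
  rw [Pi.div_apply]
  generalize √(n : ℝ) = s at *
  rw [hsq] at hn₁ ⊢
  have hpred : s ^ 2 - 1 ≠ 0 := by linarith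
  rw [show 1 - (1 / s ^ 2) ^ 2 = (s ^ 2 - 1) * (s ^ 2 + 1) / s ^ 4 by field_simp; ring]
  field_simp
  ring

end SequenceDifferences

lemma tendsto_second_difference_log_p_div :
    Tendsto (fun n : ℕ ↦ √n ^ 5 * (log (p (n + 1)) / ((n : ℝ) + 1) +
      log (p (n - 1)) / ((n : ℝ) - 1) - 2 * (log (p n) / n))) atTop (𝓝 (3 * π / √24)) := by
  have hvalue : 3 * π / √24 = 2 * (π / √6) + -(π / √6) / 2 := by
    rw [show (24 : ℝ) = 2 ^ 2 * 6 by norm_num, sqrt_mul (by positivity), sqrt_sq (by norm_num)]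
    field_simp
    norm_num
  rw [hvalue]
  exact tendsto_sqrt_pow_five_mul_div_second_difference (f := fun n ↦ log (p n))
    tendsto_sqrt_mul_log_p_succ_sub tendsto_sqrt_pow_three_mul_log_p_second_difference

lemma p_rpow_one_div (m : ℕ) (t : ℝ) : p m ^ (1 / t) = exp (log (p m) / t) := by
  rw [rpow_def_of_pos (p_pos m), mul_one_div]

theorem nth_root_p_ratio_constant_best_possible (β : ℝ) (hβ₀ : 0 < β)
    (hβ : β < 3 * π / Real.sqrt 24) :
    ∃ N : ℕ, ∀ n : ℕ, N < n →
      p n ^ ((1 : ℝ) / (n : ℝ)) / p (n + 1) ^ ((1 : ℝ) / ((n : ℝ) + 1)) *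
          (1 + β / (n : ℝ) ^ ((5 : ℝ) / 2)) <
        p (n - 1) ^ ((1 : ℝ) / ((n : ℝ) - 1)) / p n ^ ((1 : ℝ) / (n : ℝ)) := by
  obtain ⟨N, hN⟩ := eventually_atTop.mp
    (tendsto_second_difference_log_p_div.eventually_const_lt hβ)
  refine ⟨N, fun n hn ↦ ?_⟩
  have hn₀ : (0 : ℝ) < n := mod_cast (Nat.zero_le N).trans_lt hn
  have hsecond : β / √n ^ 5 < log (p (n + 1)) / ((n : ℝ) + 1) +
      log (p (n - 1)) / ((n : ℝ) - 1) - 2 * (log (p n) / n) := by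
    rw [div_lt_iff₀' (by positivity)]
    exact hN n hn.le
  have hpow : (n : ℝ) ^ ((5 : ℝ) / 2) = √n ^ 5 := by
    rw [sqrt_eq_rpow, ← rpow_natCast, ← rpow_mul hn₀.le]
    norm_num
  rw [hpow, p_rpow_one_div, p_rpow_one_div, p_rpow_one_div, ← exp_sub, ← exp_sub]
  calc _ ≤ exp (log (p n) / n - log (p (n + 1)) / (n + 1)) * exp (β / √n ^ 5) := by
        gcongr
        rw [add_comm]
        exact add_one_le_exp _
    _ = exp (log (p n) / n - log (p (n + 1)) / (n + 1) + β / √n ^ 5) := (exp_add _ _).symm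
    _ < _ := exp_lt_exp.mpr (by linarith)
end

section
/- For every integer n ≥ 40, B₁(n) < (log T̃(n+1))/(n+1) + (log T̃(n-1))/(n-1) - 2·(log T̃(n))/n < B₂(n), where B₁(n) = 72π/((n+1)·(24n+23)^{3/2}) - 4·log(μ(n-1))/(n-1)³ and B₂(n) = 72π/((n-1)·(24n-25)^{3/2}) - 4·log(μ(n+1))/(n+1)³ + 5/(n-1)³. -/
open Real

/-- `μ(x) = (π/6)·√(24x - 1)`. -/
noncomputable def mu (x : ℝ) : ℝ := π / 6 * Real.sqrt (24 * x - 1)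

/-- `d = π²/(6√3)`. -/
noncomputable def d : ℝ := π ^ 2 / (6 * Real.sqrt 3)

/-- The main term `T̃(x) = (d/μ(x)²)·(1 - 1/μ(x))·e^{μ(x)}`. -/
noncomputable def T (x : ℝ) : ℝ := d / mu x ^ 2 * (1 - 1 / mu x) * Real.exp (mu x)

/-!
The second difference of `log T(x) / x` is a value of its second derivative at some `c` within
distance `1` of `x`. Put `s = x μ'(x) / μ(x) = 12x / (24x - 1)` and `v = 1 / (μ(x) - 1)`.
Then `x³ (log T(x) / x)'' = 3 s² μ(x) - 4 log μ(x) + R(x)`, where the remainder `R(x)`, a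
function of `s`, `v` and `μ(x)`, lies between `0` and `3` for `x ≥ 1`, and
`3 s² μ(x) / x³ = 72π / (x (24x - 1)^{3/2})`. Each of the three terms of `(log T(x) / x)''` is
bounded by a decreasing function, so `c` may be replaced by an endpoint of `[x - 1, x + 1]`.
-/

open Filter Set Topology

section SecondDifference

variable {f f' f'' : ℝ → ℝ} {x h : ℝ}

theorem exists_second_difference_eq (hh : 0 < h) (hfc : ContinuousOn f (Icc (x - h) (x + h)))
    (hf : ∀ t ∈ Ioo (x - h) (x + h), HasDerivAt f (f' t) t)
    (hf' : ∀ t ∈ Ioo (x - h) (x + h), HasDerivAt f' (f'' t) t) :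
    ∃ c ∈ Ioo (x - h) (x + h), f (x + h) + f (x - h) - 2 * f x = h ^ 2 * f'' c := by
  have hdiff_cont : ContinuousOn (fun t ↦ f (t + h) - f t) (Icc (x - h) x) :=
    (hfc.comp (by fun_prop) fun t ht ↦ ⟨by linarith [ht.1], by linarith [ht.2]⟩).sub
      (hfc.mono (Icc_subset_Icc_right (by linarith)))
  have hdiff_deriv (t : ℝ) (ht : t ∈ Ioo (x - h) x) :
      HasDerivAt (fun t ↦ f (t + h) - f t) (f' (t + h) - f' t) t :=
    ((hf (t + h) ⟨by linarith [ht.1], by linarith [ht.2]⟩).comp_add_const t h).sub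
      (hf t ⟨ht.1, by linarith [ht.2]⟩)
  obtain ⟨b, hb, hb_slope⟩ :=
    exists_hasDerivAt_eq_slope _ _ (sub_lt_self x hh) hdiff_cont hdiff_deriv
  have hsub : Icc b (b + h) ⊆ Ioo (x - h) (x + h) := fun t ht ↦
    ⟨by linarith [ht.1, hb.1], by linarith [ht.2, hb.2]⟩
  obtain ⟨c, hc, hc_slope⟩ := exists_hasDerivAt_eq_slope f' f'' (lt_add_of_pos_right b hh)
    (fun t ht ↦ (hf' t (hsub ht)).continuousAt.continuousWithinAt)
    (fun t ht ↦ hf' t (hsub (Ioo_subset_Icc_self ht)))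
  refine ⟨c, hsub (Ioo_subset_Icc_self hc), ?_⟩
  rw [hc_slope, hb_slope, sub_add_cancel, add_sub_cancel_left, sub_sub_cancel]
  field_simp
  ring

theorem hasDerivAt_div_id {f' : ℝ} (hf : HasDerivAt f f' x) (hx : x ≠ 0) :
    HasDerivAt (fun t ↦ f t / t) (f' / x - f x / x ^ 2) x := by
  refine (hf.div (hasDerivAt_id x) hx).congr_deriv ?_
  simp only [id]
  field_simp

theorem hasDerivAt_div_sub_div_sq {f'' : ℝ} (hf : HasDerivAt f (f' x) x)
    (hf' : HasDerivAt f' f'' x) (hx : x ≠ 0) :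
    HasDerivAt (fun t ↦ f' t / t - f t / t ^ 2)
      ((x ^ 2 * f'' - 2 * x * f' x + 2 * f x) / x ^ 3) x := by
  refine ((hasDerivAt_div_id hf' hx).sub
    (hf.div (hasDerivAt_pow 2 x) (pow_ne_zero 2 hx))).congr_deriv ?_
  push_cast
  field_simp
  ring

theorem exists_second_difference_div_id_eq (hh : 0 < h) (hx : h < x)
    (hf : ∀ t ∈ Icc (x - h) (x + h), HasDerivAt f (f' t) t)
    (hf' : ∀ t ∈ Ioo (x - h) (x + h), HasDerivAt f' (f'' t) t) :
    ∃ c ∈ Ioo (x - h) (x + h), f (x + h) / (x + h) + f (x - h) / (x - h) - 2 * f x / x =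
      h ^ 2 * ((c ^ 2 * f'' c - 2 * c * f' c + 2 * f c) / c ^ 3) := by
  have hne (t : ℝ) (ht : t ∈ Icc (x - h) (x + h)) : t ≠ 0 := by linarith [ht.1]
  have hderiv (t : ℝ) (ht : t ∈ Icc (x - h) (x + h)) := hasDerivAt_div_id (hf t ht) (hne t ht)
  rw [mul_div_assoc 2]
  refine exists_second_difference_eq (f := fun t ↦ f t / t) hh
    (fun t ht ↦ (hderiv t ht).continuousAt.continuousWithinAt)
    (fun t ht ↦ hderiv t (Ioo_subset_Icc_self ht)) fun t ht ↦ ?_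
  have ht' := Ioo_subset_Icc_self ht
  exact hasDerivAt_div_sub_div_sq (hf t ht') (hf' t ht) (hne t ht')

end SecondDifference

section Mu

variable {x : ℝ}

theorem mu_pos_iff : 0 < mu x ↔ 0 < 24 * x - 1 := by
  rw [mu, mul_pos_iff_of_pos_left (by positivity), Real.sqrt_pos]

theorem mu_sq (hx : 0 ≤ 24 * x - 1) : mu x ^ 2 = π ^ 2 / 36 * (24 * x - 1) := by
  rw [mu, mul_pow, Real.sq_sqrt hx]
  ring

theorem five_halves_lt_mu (hx : 1 ≤ x) : 5 / 2 < mu x := by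
  have hsqrt : (4.79 : ℝ) ≤ √(24 * x - 1) := Real.le_sqrt_of_sq_le (by norm_num; linarith)
  rw [mu]
  nlinarith [Real.pi_gt_d2]

theorem hasDerivAt_radicand (x : ℝ) : HasDerivAt (fun x : ℝ ↦ 24 * x - 1) 24 x := by
  simpa using ((hasDerivAt_id x).const_mul 24).sub_const 1

theorem hasDerivAt_mu (hx : 0 < 24 * x - 1) :
    HasDerivAt mu (12 / (24 * x - 1) * mu x) x := by
  refine (((hasDerivAt_radicand x).sqrt hx.ne').const_mul (π / 6)).congr_deriv ?_
  have : 0 < √(24 * x - 1) := Real.sqrt_pos.2 hx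
  rw [mu]
  field_simp
  rw [Real.sq_sqrt hx.le]
  ring

theorem mu_div_le_one_ninth (hx : 1 ≤ x) : mu x / (24 * x - 1) ≤ 1 / 9 := by
  have hpi : π ^ 2 < 10 := by nlinarith [Real.pi_lt_d2, Real.pi_pos]
  have hmu := five_halves_lt_mu hx
  rw [div_le_iff₀ (by linarith)]
  nlinarith [mu_sq (x := x) (by linarith)]

end Mu

section LogT

variable {x : ℝ}

theorem d_pos : 0 < d := by
  unfold d
  positivity

theorem log_d_nonpos : log d ≤ 0 := by
  have hsqrt : 1.7 ≤ √3 := Real.le_sqrt_of_sq_le (by norm_num)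
  refine Real.log_nonpos d_pos.le ?_
  rw [d, div_le_one (by positivity)]
  nlinarith [Real.pi_lt_d2, Real.pi_pos]

theorem neg_one_tenth_le_log_d : -(1 / 10) ≤ log d := by
  have hsqrt : √3 ≤ 1.75 := Real.sqrt_le_iff.2 (by norm_num)
  have hd : 10 / 11 ≤ d := by
    rw [d, le_div_iff₀ (by positivity)]
    nlinarith [Real.pi_gt_d2]
  have hd_inv : d⁻¹ ≤ (10 / 11)⁻¹ := inv_anti₀ (by norm_num) hd
  linarith [Real.one_sub_inv_le_log_of_pos d_pos]

theorem log_T (hmu : 1 < mu x) :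
    log (T x) = log d - 2 * log (mu x) + log (1 - 1 / mu x) + mu x := by
  have hmu₀ : 0 < mu x := by linarith
  have hfactor : 0 < 1 - 1 / mu x := sub_pos.2 ((div_lt_one hmu₀).2 hmu)
  have hd := d_pos
  rw [T, Real.log_mul (by positivity) (Real.exp_ne_zero _),
    Real.log_mul (by positivity) hfactor.ne', Real.log_div hd.ne' (by positivity), Real.log_pow,
    Real.log_exp]
  norm_cast

/-- The derivative of `log T`, written with `μ' = 12μ / (24x - 1)`; see `hasDerivAt_log_T`. -/
noncomputable def logTDeriv (x : ℝ) : ℝ :=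
  12 / (24 * x - 1) * (mu x - 2 + 1 / (mu x - 1))

/-- The second derivative of `log T`; see `hasDerivAt_logTDeriv`. -/
noncomputable def logTDeriv₂ (x : ℝ) : ℝ :=
  (12 / (24 * x - 1)) ^ 2 * (-mu x + 4 - 2 / (mu x - 1) - mu x / (mu x - 1) ^ 2)

theorem hasDerivAt_log_T (hmu : 1 < mu x) :
    HasDerivAt (fun t ↦ log (T t)) (logTDeriv x) x := by
  have hx : 0 < 24 * x - 1 := mu_pos_iff.1 (by linarith)
  have hderiv := hasDerivAt_mu hx
  have hmu₀ : mu x ≠ 0 := by linarith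
  have hmu₁ : mu x - 1 ≠ 0 := by linarith
  have hfactor : 1 - 1 / mu x ≠ 0 := by
    rw [one_sub_div hmu₀]
    exact div_ne_zero hmu₁ hmu₀
  have hexpand : (fun t ↦ log (T t)) =ᶠ[𝓝 x]
      fun t ↦ log d - 2 * log (mu t) + log (1 - 1 / mu t) + mu t :=
    (hderiv.continuousAt.eventually_const_lt hmu).mono fun _ ↦ log_T
  refine HasDerivAt.congr_of_eventuallyEq (HasDerivAt.congr_deriv
    (((((hderiv.log hmu₀).const_mul 2).const_sub (log d)).add
      ((((hasDerivAt_const x 1).div hderiv hmu₀).const_sub 1).log hfactor)).add hderiv) ?_) hexpand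
  simp only [logTDeriv, Pi.div_apply]
  rw [one_sub_div hmu₀]
  field_simp
  ring

theorem hasDerivAt_logTDeriv (hmu : 1 < mu x) : HasDerivAt logTDeriv (logTDeriv₂ x) x := by
  have hx : 0 < 24 * x - 1 := mu_pos_iff.1 (by linarith)
  have hderiv := hasDerivAt_mu hx
  have hmu₁ : mu x - 1 ≠ 0 := by linarith
  refine (((hasDerivAt_const x 12).div (hasDerivAt_radicand x) hx.ne').mul ((hderiv.sub_const 2).add
    ((hasDerivAt_const x 1).div (hderiv.sub_const 1) hmu₁))).congr_deriv ?_
  simp only [logTDeriv₂, Pi.add_apply, Pi.div_apply]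
  field_simp
  ring

end LogT

section Remainder

/-- The remainder `R` in `x³ (log T(x) / x)'' = 3 s² m - 4 log m + R`, where `m = μ(x)` and
`s = x μ'(x) / μ(x)`. -/
noncomputable def remainder (s m : ℝ) : ℝ :=
  2 * m * (1 - 2 * s) * (1 + s) + s ^ 2 * ((1 - 1 / (m - 1)) * (4 + 1 / (m - 1))) +
    2 * s * (2 - 1 / (m - 1)) + 2 * log d + 2 * log (1 - 1 / m)

theorem leading_term_eq {x : ℝ} (hx : 0 < 24 * x - 1) :
    72 * π / (x * (24 * x - 1) ^ ((3 : ℝ) / 2)) =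
      3 * (12 * x / (24 * x - 1)) ^ 2 * mu x / x ^ 3 := by
  have hx₀ : 0 < x := by linarith
  have hrpow : (24 * x - 1) ^ ((3 : ℝ) / 2) = √(24 * x - 1) ^ 3 := by
    rw [Real.rpow_div_two_eq_sqrt 3 hx.le]
    exact_mod_cast Real.rpow_natCast _ 3
  have hsq : (24 * x - 1) ^ 2 = √(24 * x - 1) ^ 4 := by
    nth_rw 1 [← Real.sq_sqrt hx.le]
    ring
  have : 0 < √(24 * x - 1) := Real.sqrt_pos.2 hx
  rw [hrpow, mu, div_pow, hsq]
  field_simp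
  norm_num

theorem second_deriv_log_T_div_id_eq {x : ℝ} (hmu : 1 < mu x) :
    (x ^ 2 * logTDeriv₂ x - 2 * x * logTDeriv x + 2 * log (T x)) / x ^ 3 =
      72 * π / (x * (24 * x - 1) ^ ((3 : ℝ) / 2)) - 4 * log (mu x) / x ^ 3 +
        remainder (12 * x / (24 * x - 1)) (mu x) / x ^ 3 := by
  have hlin : 0 < 24 * x - 1 := mu_pos_iff.1 (by linarith)
  have hx : x ≠ 0 := by linarith
  have hmu₁ : mu x - 1 ≠ 0 := by linarith
  have hs : 12 / (24 * x - 1) = 12 * x / (24 * x - 1) / x := by field_simp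
  rw [leading_term_eq hlin, log_T hmu, logTDeriv, logTDeriv₂, hs, remainder, ← sub_div, ← add_div]
  generalize 12 * x / (24 * x - 1) = s
  generalize log (1 - 1 / mu x) = l
  field_simp
  ring

variable {s m : ℝ}

theorem remainder_lt_three (hs : 1 / 2 < s) (hm : 3 / 2 ≤ m) : remainder s m < 3 := by
  have hlog : log (1 - 1 / m) < 0 := by
    have hm_inv : 1 / m ≤ 1 / (3 / 2) := by gcongr
    have hm_inv_pos : 0 < 1 / m := by positivity
    exact Real.log_neg (by linarith) (by linarith)
  have hv : 0 < 1 / (m - 1) := one_div_pos.2 (by linarith)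
  have hquad : s ^ 2 * ((1 - 1 / (m - 1)) * (4 + 1 / (m - 1))) ≤ s ^ 2 * 4 := by
    gcongr
    nlinarith
  have hlinear : 2 * s * (2 - 1 / (m - 1)) ≤ 2 * s * 2 := by
    gcongr
    linarith
  have hcancel : 2 * m * (1 - 2 * s) * (1 + s) + s ^ 2 * 4 + 2 * s * 2 - 3 ≤ 0 :=
    calc 2 * m * (1 - 2 * s) * (1 + s) + s ^ 2 * 4 + 2 * s * 2 - 3
        = -((2 * s - 1) * (2 * m * (1 + s) - (2 * s + 3))) := by ring
      _ ≤ 0 := neg_nonpos.2 (mul_nonneg (by linarith) (by nlinarith))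
  rw [remainder]
  linarith [log_d_nonpos]

theorem neg_eight_fifteenths_le_log_one_sub_inv (hm : 5 / 2 ≤ m) :
    -(8 / 15) ≤ log (1 - 1 / m) := by
  have hm_inv : 1 / m ≤ 1 / (5 / 2) := by gcongr
  have hexp : (5 / 3 : ℝ) ≤ exp (8 / 15) :=
    le_trans (by norm_num) (Real.quadratic_le_exp_of_nonneg (by norm_num))
  have hexp_neg : exp (-(8 / 15)) ≤ (5 / 3)⁻¹ := by
    rw [Real.exp_neg]
    gcongr
  rw [Real.le_log_iff_exp_le (by linarith)]
  linarith

theorem remainder_pos (hs : 1 / 2 ≤ s) (hs' : s ≤ 12 / 23) (hm : 5 / 2 ≤ m)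
    (hsm : m * (2 * s - 1) ≤ 1 / 9) : 0 < remainder s m := by
  have hlog := neg_eight_fifteenths_le_log_one_sub_inv hm
  have hv : 0 < 1 / (m - 1) := one_div_pos.2 (by linarith)
  have hv' : 1 / (m - 1) ≤ 2 / 3 := by
    rw [div_le_iff₀ (by linarith)]
    linarith
  have hquad : (1 / 2) ^ 2 * ((1 - 2 / 3) * (4 + 2 / 3)) ≤
      s ^ 2 * ((1 - 1 / (m - 1)) * (4 + 1 / (m - 1))) := by
    gcongr ?_ ^ 2 * ?_
    nlinarith
  have hlinear : 2 * (1 / 2) * (2 - 2 / 3) ≤ 2 * s * (2 - 1 / (m - 1)) := by gcongr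
  have hfirst : m * (2 * s - 1) * (1 + s) ≤ 1 / 9 * (1 + 12 / 23) := by gcongr
  rw [remainder]
  linarith [neg_one_tenth_le_log_d]

theorem second_deriv_log_T_div_id_bounds {x : ℝ} (hx : 1 ≤ x) :
    72 * π / (x * (24 * x - 1) ^ ((3 : ℝ) / 2)) - 4 * log (mu x) / x ^ 3 <
      (x ^ 2 * logTDeriv₂ x - 2 * x * logTDeriv x + 2 * log (T x)) / x ^ 3 ∧
    (x ^ 2 * logTDeriv₂ x - 2 * x * logTDeriv x + 2 * log (T x)) / x ^ 3 <
      72 * π / (x * (24 * x - 1) ^ ((3 : ℝ) / 2)) - 4 * log (mu x) / x ^ 3 + 3 / x ^ 3 := by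
  have hmu := five_halves_lt_mu hx
  have hlin : 0 < 24 * x - 1 := by linarith
  have hs : 1 / 2 < 12 * x / (24 * x - 1) := by
    rw [lt_div_iff₀ hlin]
    linarith
  have hs' : 12 * x / (24 * x - 1) ≤ 12 / 23 := by
    rw [div_le_div_iff₀ hlin (by norm_num)]
    linarith
  have hsm : mu x * (2 * (12 * x / (24 * x - 1)) - 1) ≤ 1 / 9 := by
    have htwo : 2 * (12 * x / (24 * x - 1)) - 1 = 1 / (24 * x - 1) := by
      rw [← mul_div_assoc, div_sub_one hlin.ne']
      ring
    rw [htwo, mul_one_div]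
    exact mu_div_le_one_ninth hx
  rw [second_deriv_log_T_div_id_eq (by linarith)]
  refine ⟨lt_add_of_pos_right _ (div_pos (remainder_pos hs.le hs' hmu.le hsm) (by positivity)), ?_⟩
  gcongr
  exact remainder_lt_three hs (by linarith)

end Remainder

section Monotonicity

theorem antitoneOn_leading_term :
    AntitoneOn (fun x : ℝ ↦ 72 * π / (x * (24 * x - 1) ^ ((3 : ℝ) / 2))) (Ioi (1 / 24)) := by
  intro x (hx : 1 / 24 < x) y (hy : 1 / 24 < y) hxy
  have hlin : 0 < 24 * x - 1 := by linarith
  have : 0 < x := by linarith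
  have : 0 < y := by linarith
  dsimp only
  gcongr

theorem antitoneOn_mu_sq_div_cube : AntitoneOn (fun x ↦ mu x ^ 2 / x ^ 3) (Ici (1 / 16)) := by
  intro x (hx : 1 / 16 ≤ x) y (hy : 1 / 16 ≤ y) hxy
  have hx₀ : 0 < x := by linarith
  have hy₀ : 0 < y := by linarith
  have hfactor : 0 ≤ 24 * x * y * (x + y) - (x ^ 2 + x * y + y ^ 2) :=
    calc (0 : ℝ) ≤ x ^ 2 * (16 * y - 1) + y ^ 2 * (16 * x - 1) + x * y * (8 * (x + y) - 1) := by
          have := mul_pos hx₀ hy₀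
          nlinarith
      _ = 24 * x * y * (x + y) - (x ^ 2 + x * y + y ^ 2) := by ring
  have hcross : (24 * y - 1) * x ^ 3 ≤ (24 * x - 1) * y ^ 3 := by
    linarith [mul_nonneg (sub_nonneg.2 hxy) hfactor]
  dsimp only
  rw [mu_sq (by linarith), mu_sq (by linarith), mul_div_assoc, mul_div_assoc]
  gcongr _ * ?_
  rwa [div_le_div_iff₀ (by positivity) (by positivity)]

theorem antitoneOn_log_mu_div_cube :
    AntitoneOn (fun x ↦ 4 * log (mu x) / x ^ 3) (Ici 1) := by
  have hexp {x : ℝ} (hx : 1 ≤ x) : exp 1 ≤ mu x ^ 2 := by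
    nlinarith [five_halves_lt_mu hx, Real.exp_one_lt_d9]
  -- Passing to `μ²` is necessary: `log m / m` decreases only for `e ≤ m`, and `μ(1) < e`.
  have hsplit {x : ℝ} (hx : 1 ≤ x) :
      4 * log (mu x) / x ^ 3 = 2 * (log (mu x ^ 2) / mu x ^ 2 * (mu x ^ 2 / x ^ 3)) := by
    have hmu : 0 < mu x := by linarith [five_halves_lt_mu hx]
    rw [Real.log_pow]
    field_simp
    push_cast
    ring
  intro x (hx : 1 ≤ x) y (hy : 1 ≤ y) hxy
  have hmu : mu x ^ 2 ≤ mu y ^ 2 := by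
    rw [mu_sq (by linarith), mu_sq (by linarith)]
    gcongr
  have hlog : 0 ≤ log (mu x ^ 2) :=
    Real.log_nonneg ((Real.one_le_exp zero_le_one).trans (hexp hx))
  dsimp only
  rw [hsplit hx, hsplit hy]
  gcongr ?_ * (?_ * ?_)
  · exact Real.log_div_self_antitoneOn (hexp hx) (hexp hy) hmu
  · exact antitoneOn_mu_sq_div_cube (mem_Ici.2 (by linarith)) (mem_Ici.2 (by linarith)) hxy

end Monotonicity

theorem exists_second_difference_log_T_div_id_eq {x : ℝ} (hx : 2 ≤ x) :
    ∃ c ∈ Ioo (x - 1) (x + 1),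
      log (T (x + 1)) / (x + 1) + log (T (x - 1)) / (x - 1) - 2 * log (T x) / x =
        (c ^ 2 * logTDeriv₂ c - 2 * c * logTDeriv c + 2 * log (T c)) / c ^ 3 := by
  have hmu {t : ℝ} (ht : t ∈ Icc (x - 1) (x + 1)) : 1 < mu t := by
    linarith [five_halves_lt_mu (x := t) (by linarith [ht.1])]
  simpa only [one_pow, one_mul] using
    exists_second_difference_div_id_eq one_pos (by linarith)
      (fun t ht ↦ hasDerivAt_log_T (hmu ht))
      (fun t ht ↦ hasDerivAt_logTDeriv (hmu (Ioo_subset_Icc_self ht)))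

theorem second_difference_log_T_bounds_general {x : ℝ} (hx : 2 ≤ x) :
    72 * π / ((x + 1) * (24 * x + 23) ^ ((3 : ℝ) / 2)) - 4 * log (mu (x - 1)) / (x - 1) ^ 3 <
      log (T (x + 1)) / (x + 1) + log (T (x - 1)) / (x - 1) - 2 * log (T x) / x ∧
    log (T (x + 1)) / (x + 1) + log (T (x - 1)) / (x - 1) - 2 * log (T x) / x <
      72 * π / ((x - 1) * (24 * x - 25) ^ ((3 : ℝ) / 2)) -
        4 * log (mu (x + 1)) / (x + 1) ^ 3 + 3 / (x - 1) ^ 3 := by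
  obtain ⟨c, ⟨hc, hc'⟩, hdiff⟩ := exists_second_difference_log_T_div_id_eq hx
  have hleft : x - 1 ∈ Ici 1 := mem_Ici.2 (by linarith)
  have hmid : c ∈ Ici 1 := mem_Ici.2 (by linarith)
  have hright : x + 1 ∈ Ici 1 := mem_Ici.2 (by linarith)
  have hleading := antitoneOn_leading_term.mono (Ici_subset_Ioi.2 (by norm_num : (1 / 24 : ℝ) < 1))
  have hleading_right := hleading hmid hright hc'.le
  have hleading_left := hleading hleft hmid hc.le
  simp only [show 24 * (x + 1) - 1 = 24 * x + 23 by ring] at hleading_right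
  simp only [show 24 * (x - 1) - 1 = 24 * x - 25 by ring] at hleading_left
  have hlog_right := antitoneOn_log_mu_div_cube hmid hright hc'.le
  have hlog_left := antitoneOn_log_mu_div_cube hleft hmid hc.le
  have hcube : 3 / c ^ 3 ≤ 3 / (x - 1) ^ 3 := by
    have : 0 < x - 1 := by linarith
    gcongr
  obtain ⟨hlower, hupper⟩ := second_deriv_log_T_div_id_bounds hmid
  rw [hdiff]
  constructor <;> linarith

theorem second_difference_log_T_bounds (n : ℕ) (hn : 40 ≤ n) :
    72 * π / (((n : ℝ) + 1) * (24 * (n : ℝ) + 23) ^ ((3 : ℝ) / 2)) -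
        4 * Real.log (mu ((n : ℝ) - 1)) / ((n : ℝ) - 1) ^ 3 <
      Real.log (T ((n : ℝ) + 1)) / ((n : ℝ) + 1) +
        Real.log (T ((n : ℝ) - 1)) / ((n : ℝ) - 1) -
        2 * Real.log (T (n : ℝ)) / (n : ℝ) ∧
    Real.log (T ((n : ℝ) + 1)) / ((n : ℝ) + 1) +
        Real.log (T ((n : ℝ) - 1)) / ((n : ℝ) - 1) -
        2 * Real.log (T (n : ℝ)) / (n : ℝ) <
      72 * π / (((n : ℝ) - 1) * (24 * (n : ℝ) - 25) ^ ((3 : ℝ) / 2)) -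
        4 * Real.log (mu ((n : ℝ) + 1)) / ((n : ℝ) + 1) ^ 3 + 5 / ((n : ℝ) - 1) ^ 3 := by
  have hn' : (40 : ℝ) ≤ n := by exact_mod_cast hn
  have hpos : (0 : ℝ) < n - 1 := by linarith
  refine (second_difference_log_T_bounds_general (by linarith)).imp_right fun h ↦ h.trans_le ?_
  gcongr
  norm_num
end
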